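/- With the conductor setup for a true triple g of degree d: (a) the ring A/c is 1-dimensional Cohen–Macaulay of multiplicity binom(d−1, 2); (b) the ring V/c is 1-dimensional Cohen–Macaulay of multiplicity (d−1)(d−2); and (c) the extended ideal cB equals c_g · (x,y)^{d−2} for some homogeneous form c_g ∈ B of degree (d−1)(d−2). -/

import Mathlib

set_option maxHeartbeats 1000000
set_option synthInstance.maxHeartbeats 1000000

open MvPolynomial

/-- The height of an ideal: the infimum of the heights of the primes containing it. -/
noncomputable def idealHeight {R : Type*} [CommRing R] (I : Ideal R) : ℕ∞ :=
  ⨅ (P : PrimeSpectrum R) (_ : I ≤ P.asIdeal), Order.height P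

/-- `e` is the Hilbert–Samuel multiplicity of the ideal `J` on the (one-dimensional) ring `R`,
characterized as the limit of `λ(R/Jⁿ)/n`; lengths are expressed as Krull dimensions of
submodule lattices. -/
def IsHSMultOfDimOne (R : Type*) [CommRing R] (J : Ideal R) (e : ℕ) : Prop :=
  ∃ len : ℕ → ℕ,
    (∀ n : ℕ, Order.krullDim (Submodule R (R ⧸ J ^ n)) = ((len n : ℕ∞) : WithBot ℕ∞)) ∧
    Filter.Tendsto (fun n : ℕ => (len n : ℝ) / (n : ℝ)) Filter.atTop (nhds (e : ℝ))

/-- The coordinate ring `A = k[g₁,g₂,g₃]`. -/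
noncomputable def coneRing {k : Type*} [Field k] (g : Fin 3 → MvPolynomial (Fin 2) k) :
    Subalgebra k (MvPolynomial (Fin 2) k) :=
  Algebra.adjoin k (Set.range g)

/-- The generators `g i`, as elements of `A = k[g₁,g₂,g₃]`. -/
noncomputable def coneGen {k : Type*} [Field k] (g : Fin 3 → MvPolynomial (Fin 2) k)
    (i : Fin 3) : coneRing g :=
  ⟨g i, Algebra.subset_adjoin ⟨i, rfl⟩⟩

/-- The `d`-th Veronese subring `V = k[B_d]` of `B = k[x,y]`. -/
noncomputable def veronese (k : Type*) [Field k] (d : ℕ) :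
    Subalgebra k (MvPolynomial (Fin 2) k) :=
  Algebra.adjoin k {f : MvPolynomial (Fin 2) k | f.IsHomogeneous d}

/-
Extend scalars to the algebraic closure of `k`. Two suitable linear combinations `f` of the `g i`
are then coprime, so `A` and `V` are free modules over `R = k[f]`: `V` has a basis of one form of
degree `0` and `d - 1` forms of degree `d`, while by birationality `A = R[y]` has the basis
`1, y, …, y ^ (d - 1)` for a further linear combination `y`. The last coordinate functional of this
power basis generates `Hom_R(A, R)`, hence the conductor `c = Hom_A(V, A)` is the `R`-dual of `V`
up to a shift, which determines its Hilbert function.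

Let `E = d - 2`. In degree `d * E` the conductor has dimension `E + 1`. Dividing these forms by
their greatest common divisor `h` and comparing with the dimension of `c` in higher degrees, one
finds that `h` has degree `(E + 1) * E`, that these forms are all the multiples of `h` of degree
`d * E`, and then that `c = V ∩ hB`. This gives (c), since the forms of degree `E` generate
`(x, y) ^ E`. For (a) and (b), the Hilbert functions yield the multiplicities, and an element
coprime to `h` is regular modulo `c`.
-/

section HomogeneousComponents

variable {σ R : Type*} [CommSemiring R]

attribute [local instance] MvPolynomial.gradedAlgebra

theorem isHomogeneous_iff_degree_eq {f : MvPolynomial σ R} {n : ℕ} :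
    f.IsHomogeneous n ↔ ∀ s ∈ f.support, s.degree = n := by
  have weight_eq (s : σ →₀ ℕ) : Finsupp.weight 1 s = s.degree :=
    (DFunLike.congr_fun Finsupp.degree_eq_weight_one s).symm
  simp only [IsHomogeneous, IsWeightedHomogeneous, weight_eq, mem_support_iff]

theorem homogeneousSubmodule_add (m n : ℕ) :
    homogeneousSubmodule σ R (m + n) = homogeneousSubmodule σ R m * homogeneousSubmodule σ R n := by
  rw [← homogeneousSubmodule_one_pow, pow_add, homogeneousSubmodule_one_pow,
    homogeneousSubmodule_one_pow]

theorem homogeneousComponent_mul_of_isHomogeneous_left {f : MvPolynomial σ R} {e : ℕ}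
    (hf : f.IsHomogeneous e) (w : MvPolynomial σ R) (n : ℕ) :
    homogeneousComponent n (f * w) = if e ≤ n then f * homogeneousComponent (n - e) w else 0 := by
  have decompose_eq (g : MvPolynomial σ R) (i : ℕ) :
      (DirectSum.decompose (homogeneousSubmodule σ R) g i : MvPolynomial σ R) =
        homogeneousComponent i g := decomposition.decompose'_apply g i
  simpa only [decompose_eq] using
    DirectSum.coe_decompose_mul_of_left_mem (homogeneousSubmodule σ R) (b := w) n hf

theorem homogeneousComponent_add_mul_of_isHomogeneous_left {f : MvPolynomial σ R} {e : ℕ}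
    (hf : f.IsHomogeneous e) (w : MvPolynomial σ R) (n : ℕ) :
    homogeneousComponent (e + n) (f * w) = f * homogeneousComponent n w := by
  rw [homogeneousComponent_mul_of_isHomogeneous_left hf, if_pos (Nat.le_add_right e n),
    Nat.add_sub_cancel_left]

theorem exists_isHomogeneous_eq_mul_of_dvd {f v : MvPolynomial σ R} {e n : ℕ}
    (hf : f.IsHomogeneous e) (hv : v.IsHomogeneous (e + n)) (h : f ∣ v) :
    ∃ w : MvPolynomial σ R, w.IsHomogeneous n ∧ v = f * w := by
  obtain ⟨w, rfl⟩ := h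
  exact ⟨homogeneousComponent n w, homogeneousComponent_isHomogeneous n w, by
    rw [← homogeneousComponent_add_mul_of_isHomogeneous_left hf, homogeneousComponent_eq_self hv]⟩

theorem ext_homogeneousComponent {f g : MvPolynomial σ R}
    (h : ∀ n, homogeneousComponent n f = homogeneousComponent n g) : f = g := by
  ext s
  simpa [coeff_homogeneousComponent] using congrArg (coeff s) (h s.degree)

theorem isHomogeneous_of_homogeneousComponent_eq_zero {f : MvPolynomial σ R} {n : ℕ}
    (h : ∀ m, m ≠ n → homogeneousComponent m f = 0) : f.IsHomogeneous n := by
  have hf : homogeneousComponent n f = f := ext_homogeneousComponent fun m ↦ by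
    rw [homogeneousComponent_of_mem (homogeneousComponent_isHomogeneous n f)]
    split_ifs with hm
    · rw [hm]
    · exact (h m hm).symm
  exact hf ▸ homogeneousComponent_isHomogeneous n f

theorem mul_isHomogeneous_of_add_eq {f w : MvPolynomial σ R} {m n N : ℕ}
    (hf : f.IsHomogeneous m) (hw : w.IsHomogeneous n) (h : m + n = N) :
    (f * w).IsHomogeneous N :=
  h ▸ hf.mul hw

theorem exists_isHomogeneous_eq_sum_of_mem_span {ι : Type*} [Fintype ι]
    {f : ι → MvPolynomial σ R} {e n : ℕ} (hf : ∀ i, (f i).IsHomogeneous e) {v : MvPolynomial σ R}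
    (hv : v.IsHomogeneous (e + n)) (hmem : v ∈ Ideal.span (Set.range f)) :
    ∃ a : ι → MvPolynomial σ R, (∀ i, (a i).IsHomogeneous n) ∧ v = ∑ i, f i * a i := by
  obtain ⟨c, rfl⟩ := Ideal.mem_span_range_iff_exists_fun.mp hmem
  refine ⟨fun i ↦ homogeneousComponent n (c i),
    fun i ↦ homogeneousComponent_isHomogeneous n (c i), ?_⟩
  simp_rw [← homogeneousComponent_add_mul_of_isHomogeneous_left (hf _), mul_comm (f _)]
  rw [← map_sum, homogeneousComponent_eq_self hv]

end HomogeneousComponents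

section Order

variable {σ R : Type*} [CommSemiring R]

theorem order_toMvPowerSeries_le_degree {p : MvPolynomial σ R} {s : σ →₀ ℕ} (hs : s ∈ p.support) :
    (p : MvPowerSeries σ R).order ≤ s.degree :=
  MvPowerSeries.order_le (by rwa [coeff_coe, ← mem_support_iff])

theorem order_toMvPowerSeries_le_totalDegree {p : MvPolynomial σ R} (hp : p ≠ 0) :
    (p : MvPowerSeries σ R).order ≤ p.totalDegree := by
  obtain ⟨s, hs⟩ := support_nonempty.mpr hp
  exact (order_toMvPowerSeries_le_degree hs).trans (Nat.cast_le.mpr (le_totalDegree hs))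

theorem le_order_toMvPowerSeries_of_isHomogeneous {p : MvPolynomial σ R} {n : ℕ}
    (hp : p.IsHomogeneous n) :
    (n : ℕ∞) ≤ (p : MvPowerSeries σ R).order := by
  refine MvPowerSeries.nat_le_order fun s hs ↦ ?_
  by_contra hne
  rw [coeff_coe] at hne
  exact hs.ne (isHomogeneous_iff_degree_eq.mp hp s (mem_support_iff.mpr hne))

theorem isHomogeneous_totalDegree_of_mul [NoZeroDivisors R] {p q : MvPolynomial σ R} {n : ℕ}
    (h : (p * q).IsHomogeneous n) (hpq : p * q ≠ 0) : p.IsHomogeneous p.totalDegree := by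
  obtain ⟨hp, hq⟩ := mul_ne_zero_iff.mp hpq
  have hq_le := order_toMvPowerSeries_le_totalDegree hq
  have hdeg : p.totalDegree + q.totalDegree = n := by
    rw [← totalDegree_mul_of_isDomain hp hq, h.totalDegree hpq]
  have hord : ((p.totalDegree + q.totalDegree : ℕ) : ℕ∞) ≤
      (p : MvPowerSeries σ R).order + (q : MvPowerSeries σ R).order := by
    rw [← MvPowerSeries.order_mul, ← coe_mul, hdeg]
    exact le_order_toMvPowerSeries_of_isHomogeneous h
  have hp_le : (p.totalDegree : ℕ∞) ≤ (p : MvPowerSeries σ R).order := by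
    refine WithTop.le_of_add_le_add_right (WithTop.natCast_ne_top q.totalDegree) ?_
    exact_mod_cast hord.trans (add_le_add_right hq_le _)
  exact isHomogeneous_iff_degree_eq.mpr fun s hs ↦ le_antisymm (le_totalDegree hs)
    (Nat.cast_le.mp (hp_le.trans (order_toMvPowerSeries_le_degree hs)))

end Order

section BinaryForms

variable {k : Type*} [Field k]

theorem homogeneousSubmodule_eq_restrictSupport {σ R : Type*} [CommSemiring R] (n : ℕ) :
    homogeneousSubmodule σ R n = restrictSupport R {s | s.degree = n} := by
  ext p
  rw [mem_homogeneousSubmodule, mem_restrictSupport_iff, isHomogeneous_iff_degree_eq]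
  rfl

instance finite_homogeneousSubmodule {σ : Type*} [Finite σ] (n : ℕ) :
    Module.Finite k (homogeneousSubmodule σ k n) :=
  Module.Finite.iff_fg.mpr (homogeneousSubmodule_fg σ k n)

theorem finrank_homogeneousSubmodule_fin_two (n : ℕ) :
    Module.finrank k (homogeneousSubmodule (Fin 2) k n) = n + 1 := by
  rw [homogeneousSubmodule_eq_restrictSupport,
    Module.finrank_eq_nat_card_basis (basisRestrictSupport k _), ← Finset.Nat.card_antidiagonal n,
    ← Nat.card_eq_finsetCard]
  have mem_antidiagonal (s : Fin 2 →₀ ℕ) :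
      s.degree = n ↔ (s 0, s 1) ∈ Finset.HasAntidiagonal.antidiagonal n := by
    rw [Finset.HasAntidiagonal.mem_antidiagonal, Finsupp.degree_eq_sum, Fin.sum_univ_two]
  exact Nat.card_congr <| Equiv.subtypeEquiv
    (Finsupp.equivFunOnFinite.trans (finTwoArrowEquiv ℕ)) mem_antidiagonal

theorem idealOfVars_fin_two (R : Type*) [CommSemiring R] :
    idealOfVars (Fin 2) R = Ideal.span {X 0, X 1} := by
  rw [idealOfVars]
  congr 1
  ext f
  simp only [Set.mem_range, Fin.exists_fin_two, Set.mem_insert_iff, Set.mem_singleton_iff, eq_comm]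

theorem mem_idealOfVars_pow_of_isHomogeneous {σ R : Type*} [CommSemiring R]
    {v : MvPolynomial σ R} {n : ℕ} (hv : v.IsHomogeneous n) : v ∈ idealOfVars σ R ^ n :=
  (mem_pow_idealOfVars_iff n v).mpr fun _ hs ↦ (hv.degree_eq_sum_deg_support hs).le

theorem isRelPrime_X_zero_X_one : IsRelPrime (X 0 : MvPolynomial (Fin 2) k) (X 1) :=
  X_prime.irreducible.isRelPrime_iff_not_dvd.mpr fun h ↦ absurd (X_dvd_X.mp h) (by decide)

theorem eq_zero_of_mul_add_mul_eq_zero {d n : ℕ} (hn : n < d) {f₁ f₂ a b : MvPolynomial (Fin 2) k}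
    (h₂ : f₂.IsHomogeneous d) (hne : f₂ ≠ 0) (hrel : IsRelPrime f₁ f₂) (ha : a.IsHomogeneous n)
    (hab : f₁ * a + f₂ * b = 0) : a = 0 ∧ b = 0 := by
  have ha0 : a = 0 := by
    by_contra hane
    have hdvd : f₂ ∣ a := hrel.symm.dvd_of_dvd_mul_left ⟨-b, by linear_combination hab⟩
    have hle := totalDegree_le_of_dvd_of_isDomain hdvd hane
    rw [ha.totalDegree hane, h₂.totalDegree hne] at hle
    omega
  refine ⟨ha0, ?_⟩
  simpa [ha0, hne] using hab

theorem mem_span_pair_of_isHomogeneous {d : ℕ} (hd : 1 ≤ d) {f₁ f₂ v : MvPolynomial (Fin 2) k}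
    (h₁ : f₁.IsHomogeneous d) (h₂ : f₂.IsHomogeneous d) (hne : f₂ ≠ 0) (hrel : IsRelPrime f₁ f₂)
    (hv : v.IsHomogeneous (d + (d - 1))) : v ∈ Ideal.span {f₁, f₂} := by
  let H := homogeneousSubmodule (Fin 2) k
  let T : (H (d - 1) × H (d - 1)) →ₗ[k] H (d + (d - 1)) :=
    (((LinearMap.mulLeft k f₁).domRestrict _).coprod
      ((LinearMap.mulLeft k f₂).domRestrict _)).codRestrict _
      fun p ↦ (h₁.mul p.1.2).add (h₂.mul p.2.2)
  have T_injective : Function.Injective T := by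
    rw [injective_iff_map_eq_zero]
    intro p hp
    obtain ⟨ha, hb⟩ := eq_zero_of_mul_add_mul_eq_zero (n := d - 1) (by omega) h₂ hne hrel p.1.2
      (congrArg Subtype.val hp)
    exact Prod.ext (Subtype.ext ha) (Subtype.ext hb)
  have T_surjective : Function.Surjective T := by
    refine (LinearMap.injective_iff_surjective_of_finrank_eq_finrank ?_).mp T_injective
    simp only [H, Module.finrank_prod, finrank_homogeneousSubmodule_fin_two]
    omega
  obtain ⟨p, hp⟩ := T_surjective ⟨v, hv⟩
  rw [Ideal.mem_span_pair]
  exact ⟨p.1, p.2, by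
    rw [mul_comm _ f₁, mul_comm _ f₂]
    exact congrArg Subtype.val hp⟩

theorem idealOfVars_pow_le_span_pair_of_isRelPrime {d : ℕ} (hd : 1 ≤ d)
    {f₁ f₂ : MvPolynomial (Fin 2) k} (h₁ : f₁.IsHomogeneous d) (h₂ : f₂.IsHomogeneous d)
    (hne : f₂ ≠ 0) (hrel : IsRelPrime f₁ f₂) :
    idealOfVars (Fin 2) k ^ (d + (d - 1)) ≤ Ideal.span {f₁, f₂} := by
  rw [pow_idealOfVars_eq_span, Ideal.span_le]
  rintro _ ⟨s, hs, rfl⟩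
  exact mem_span_pair_of_isHomogeneous hd h₁ h₂ hne hrel (isHomogeneous_monomial 1 hs)

end BinaryForms

section HomogeneousPrimes

theorem idealOfVars_eq_ker_constantCoeff (σ R : Type*) [CommSemiring R] :
    idealOfVars σ R = RingHom.ker (constantCoeff : MvPolynomial σ R →+* R) := by
  ext f
  rw [← pow_one (idealOfVars σ R), mem_pow_idealOfVars_iff', RingHom.mem_ker]
  simp only [Nat.lt_one_iff, Finsupp.degree_eq_zero_iff, forall_eq, constantCoeff_eq]

instance isPrime_idealOfVars (σ R : Type*) [CommRing R] [IsDomain R] :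
    (idealOfVars σ R).IsPrime :=
  idealOfVars_eq_ker_constantCoeff σ R ▸ RingHom.ker_isPrime _

attribute [local instance] MvPolynomial.gradedAlgebra

variable {k : Type*} [Field k]

theorem le_idealOfVars_of_isHomogeneous {σ : Type*} {I : Ideal (MvPolynomial σ k)}
    (hI : I.IsHomogeneous (homogeneousSubmodule σ k)) (hne : I ≠ ⊤) : I ≤ idealOfVars σ k := by
  rw [idealOfVars_eq_ker_constantCoeff]
  intro f hf
  have hC := homogeneousComponent_mem_of_mem hI hf 0
  rw [homogeneousComponent_zero] at hC
  by_contra hunit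
  exact hne (Ideal.eq_top_of_isUnit_mem _ hC ((Ne.isUnit hunit).map C))

theorem eq_of_span_singleton_lt_of_le {p : MvPolynomial (Fin 2) k} (hp : Prime p)
    {Q M : Ideal (MvPolynomial (Fin 2) k)} (hQ : Q.IsPrime) (hM : M.IsPrime)
    (hpQ : Ideal.span {p} < Q) (hQM : Q ≤ M) : Q = M := by
  by_contra hne
  have hpp : (Ideal.span {p}).IsPrime := (Ideal.span_singleton_prime hp.ne_zero).mpr hp
  have hbot : ⊥ < Ideal.span {p} := by
    rw [bot_lt_iff_ne_bot, Ne, Ideal.span_singleton_eq_bot]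
    exact hp.ne_zero
  let chain : LTSeries (PrimeSpectrum (MvPolynomial (Fin 2) k)) :=
    { length := 3
      toFun := ![⟨⊥, Ideal.isPrime_bot⟩, ⟨_, hpp⟩, ⟨Q, hQ⟩, ⟨M, hM⟩]
      step := fun i ↦ match i with
        | 0 => hbot
        | 1 => hpQ
        | 2 => lt_of_le_of_ne hQM hne }
  have hdim : ringKrullDim (MvPolynomial (Fin 2) k) = 2 := by
    rw [ringKrullDim_of_isNoetherianRing, ringKrullDim_eq_zero_of_field]
    norm_num
  have hle : (3 : WithBot ℕ∞) ≤ 2 := hdim ▸ Order.LTSeries.length_le_krullDim chain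
  exact absurd hle (by decide)

theorem exists_idealOfVars_pow_le_span {S : Set (MvPolynomial (Fin 2) k)}
    (hS : ∀ f ∈ S, ∃ n, f.IsHomogeneous n) (h : ∀ p, Prime p → ∃ f ∈ S, ¬p ∣ f) :
    ∃ N, idealOfVars (Fin 2) k ^ N ≤ Ideal.span S := by
  let 𝒜 := homogeneousSubmodule (Fin 2) k
  suffices hrad : idealOfVars (Fin 2) k ≤ (Ideal.span S).radical from
    Ideal.exists_pow_le_of_le_radical_of_fg hrad (idealOfVars_fg (Fin 2) k)
  rw [Ideal.radical_eq_sInf]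
  refine le_sInf fun P ⟨hSP, hP⟩ ↦ ?_
  have hS' : (Ideal.span S).IsHomogeneous 𝒜 := Ideal.homogeneous_span 𝒜 S hS
  let Q := (P.homogeneousCore 𝒜).toIdeal
  have hQ : Q.IsPrime := hP.homogeneousCore
  have hSQ : Ideal.span S ≤ Q :=
    hS'.toIdeal_homogeneousCore_eq_self ▸ Ideal.homogeneousCore_mono 𝒜 hSP
  have hQ0 : Q ≠ ⊥ := by
    obtain ⟨f, hfS, hf⟩ := h (X 0) X_prime
    refine fun hbot ↦ hf ?_
    have : f ∈ Q := hSQ (Ideal.subset_span hfS)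
    rw [hbot, Ideal.mem_bot] at this
    exact this ▸ dvd_zero _
  obtain ⟨p, hpQ, hp⟩ := hQ.exists_mem_prime_of_ne_bot hQ0
  obtain ⟨f, hfS, hpf⟩ := h p hp
  have hlt : Ideal.span {p} < Q := by
    refine lt_of_le_not_ge ((Ideal.span_singleton_le_iff_mem Q).mpr hpQ) fun hle ↦ hpf ?_
    exact Ideal.mem_span_singleton.mp (hle (hSQ (Ideal.subset_span hfS)))
  have hQM : Q ≤ idealOfVars (Fin 2) k :=
    le_idealOfVars_of_isHomogeneous (P.homogeneousCore 𝒜).isHomogeneous hQ.ne_top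
  rw [← eq_of_span_singleton_lt_of_le hp hQ (isPrime_idealOfVars (Fin 2) k) hlt hQM]
  exact Ideal.toIdeal_homogeneousCore_le 𝒜 P

end HomogeneousPrimes

section GradedSubspaces

variable {σ k : Type*} [Field k]

/-- A subspace of a polynomial ring is graded if it contains the homogeneous components of its
elements. -/
def IsGraded (N : Submodule k (MvPolynomial σ k)) : Prop :=
  ∀ f ∈ N, ∀ n, homogeneousComponent n f ∈ N

/-- The Hilbert function of a (graded) subspace `N` of a polynomial ring: the dimension of the
space of forms of degree `n` in `N`. -/
noncomputable def hilbertFunction (N : Submodule k (MvPolynomial σ k)) (n : ℕ) : ℕ :=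
  Module.finrank k ↥(N ⊓ homogeneousSubmodule σ k n)

instance finite_inf_homogeneousSubmodule [Finite σ] (N : Submodule k (MvPolynomial σ k)) (n : ℕ) :
    Module.Finite k ↥(N ⊓ homogeneousSubmodule σ k n) :=
  Submodule.finiteDimensional_inf_right N _

theorem IsGraded.inf {M N : Submodule k (MvPolynomial σ k)} (hM : IsGraded M)
    (hN : IsGraded N) : IsGraded (M ⊓ N) :=
  fun f hf n ↦ ⟨hM f hf.1 n, hN f hf.2 n⟩

theorem IsGraded.le_of_forall_inf_homogeneousSubmodule_le {M N : Submodule k (MvPolynomial σ k)}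
    (hM : IsGraded M) (h : ∀ n, M ⊓ homogeneousSubmodule σ k n ≤ N) : M ≤ N := by
  intro f hf
  rw [← sum_homogeneousComponent f]
  exact sum_mem fun n _ ↦ h n ⟨hM f hf n, homogeneousComponent_isHomogeneous n f⟩

theorem isGraded_span_singleton {h : MvPolynomial σ k} {e : ℕ} (he : h.IsHomogeneous e) :
    IsGraded ((Ideal.span {h}).restrictScalars k) := by
  intro f hf n
  obtain ⟨w, rfl⟩ := Ideal.mem_span_singleton.mp hf
  rw [homogeneousComponent_mul_of_isHomogeneous_left he]
  split_ifs
  · exact Ideal.mem_span_singleton.mpr (dvd_mul_right _ _)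
  · exact zero_mem _

variable {ι : Type*} {f : ι → MvPolynomial σ k} {d : ℕ}

theorem homogeneousComponent_aeval (hf : ∀ i, (f i).IsHomogeneous d) (q : MvPolynomial ι k)
    (n : ℕ) :
    homogeneousComponent n (aeval f q) = ∑ i ∈ Finset.range (q.totalDegree + 1),
      if n = d * i then aeval f (homogeneousComponent i q) else 0 := by
  conv_lhs => rw [← sum_homogeneousComponent q, map_sum, map_sum]
  exact Finset.sum_congr rfl fun i _ ↦ homogeneousComponent_of_mem
    ((homogeneousComponent_isHomogeneous i q).aeval f hf)

theorem homogeneousComponent_mul_aeval (hd : d ≠ 0) (hf : ∀ i, (f i).IsHomogeneous d)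
    (q : MvPolynomial ι k) (n : ℕ) :
    homogeneousComponent (d * n) (aeval f q) = aeval f (homogeneousComponent n q) := by
  simp only [homogeneousComponent_aeval hf, Nat.mul_right_inj hd, Finset.sum_ite_eq,
    Finset.mem_range, Nat.lt_succ_iff]
  refine ite_eq_left_iff.mpr fun hn ↦ ?_
  rw [homogeneousComponent_eq_zero n q (not_le.mp hn), map_zero]

theorem homogeneousComponent_aeval_of_not_dvd (hf : ∀ i, (f i).IsHomogeneous d)
    (q : MvPolynomial ι k) {n : ℕ} (hn : ¬d ∣ n) : homogeneousComponent n (aeval f q) = 0 := by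
  rw [homogeneousComponent_aeval hf]
  exact Finset.sum_eq_zero fun i _ ↦ if_neg fun h ↦ hn ⟨i, h⟩

theorem isGraded_adjoin {T : Set (MvPolynomial σ k)} (hd : d ≠ 0)
    (hT : ∀ t ∈ T, t.IsHomogeneous d) : IsGraded (Subalgebra.toSubmodule (Algebra.adjoin k T)) := by
  have hf (t : T) : t.1.IsHomogeneous d := hT t t.2
  rw [Algebra.adjoin_eq_range]
  rintro _ ⟨q, rfl⟩ n
  by_cases hn : d ∣ n
  · obtain ⟨m, rfl⟩ := hn
    exact ⟨homogeneousComponent m q, (homogeneousComponent_mul_aeval hd hf q m).symm⟩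
  · exact ⟨0, (map_zero _).trans (homogeneousComponent_aeval_of_not_dvd hf q hn).symm⟩

theorem adjoin_inf_homogeneousSubmodule (hd : d ≠ 0) (hf : ∀ i, (f i).IsHomogeneous d) (n : ℕ) :
    Subalgebra.toSubmodule (Algebra.adjoin k (Set.range f)) ⊓ homogeneousSubmodule σ k (d * n) =
      (homogeneousSubmodule ι k n).map (aeval f).toLinearMap := by
  rw [Algebra.adjoin_range_eq_range_aeval]
  apply le_antisymm
  · rintro _ ⟨⟨q, rfl⟩, hq⟩
    refine ⟨homogeneousComponent n q, homogeneousComponent_isHomogeneous n q, ?_⟩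
    exact (homogeneousComponent_mul_aeval hd hf q n).symm.trans (homogeneousComponent_eq_self hq)
  · rintro _ ⟨q, hq, rfl⟩
    exact ⟨⟨q, rfl⟩, IsHomogeneous.aeval hq f hf⟩

theorem hilbertFunction_adjoin_of_not_dvd [Finite σ] (hf : ∀ i, (f i).IsHomogeneous d) {n : ℕ}
    (hn : ¬d ∣ n) :
    hilbertFunction (Subalgebra.toSubmodule (Algebra.adjoin k (Set.range f))) n = 0 := by
  rw [hilbertFunction, Submodule.finrank_eq_zero, Submodule.eq_bot_iff,
    Algebra.adjoin_range_eq_range_aeval]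
  rintro _ ⟨⟨q, rfl⟩, hq⟩
  exact (homogeneousComponent_eq_self hq).symm.trans (homogeneousComponent_aeval_of_not_dvd hf q hn)

variable [Finite ι]

theorem hilbertFunction_adjoin_le (hd : d ≠ 0) (hf : ∀ i, (f i).IsHomogeneous d) (n : ℕ) :
    hilbertFunction (Subalgebra.toSubmodule (Algebra.adjoin k (Set.range f))) (d * n) ≤
      Module.finrank k (homogeneousSubmodule ι k n) := by
  rw [hilbertFunction, adjoin_inf_homogeneousSubmodule hd hf]
  exact Submodule.finrank_map_le _ _

theorem algebraicIndependent_of_le_hilbertFunction (hd : d ≠ 0)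
    (hf : ∀ i, (f i).IsHomogeneous d)
    (h : ∀ n, Module.finrank k (homogeneousSubmodule ι k n) ≤
      hilbertFunction (Subalgebra.toSubmodule (Algebra.adjoin k (Set.range f))) (d * n)) :
    AlgebraicIndependent k f := by
  refine (injective_iff_map_eq_zero (aeval f : MvPolynomial ι k →ₐ[k] MvPolynomial σ k)).mpr
    fun q hq ↦ ext_homogeneousComponent fun n ↦ ?_
  let T := (aeval f).toLinearMap.domRestrict (homogeneousSubmodule ι k n)
  have hker : LinearMap.ker T = ⊥ := by
    have hrank := T.finrank_range_add_finrank_ker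
    have hn := h n
    rw [hilbertFunction, adjoin_inf_homogeneousSubmodule hd hf] at hn
    rw [LinearMap.range_domRestrict] at hrank
    exact Submodule.finrank_eq_zero.mp (by omega)
  have hzero : T ⟨_, homogeneousComponent_isHomogeneous n q⟩ = 0 :=
    (homogeneousComponent_mul_aeval hd hf q n).symm.trans (by rw [hq, map_zero])
  rw [map_zero]
  exact Subtype.ext_iff.mp (LinearMap.ker_eq_bot'.mp hker _ hzero)

end GradedSubspaces

section Veronese

variable {k : Type*} [Field k] {d : ℕ}

theorem veronese_eq_adjoin_range (k : Type*) [Field k] (d : ℕ) : veronese k d =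
    Algebra.adjoin k (Set.range ((↑) : homogeneousSubmodule (Fin 2) k d → _)) := by
  rw [Subtype.range_coe]
  rfl

theorem homogeneousSubmodule_le_veronese (k : Type*) [Field k] (d n : ℕ) :
    homogeneousSubmodule (Fin 2) k (d * n) ≤ Subalgebra.toSubmodule (veronese k d) := by
  induction n with
  | zero =>
    rw [mul_zero, homogeneousSubmodule_zero]
    exact Submodule.one_le.mpr (one_mem (veronese k d))
  | succ n ih =>
    rw [mul_add_one, homogeneousSubmodule_add, Submodule.mul_le]
    exact fun v hv w hw ↦ (veronese k d).mul_mem (ih hv) (Algebra.subset_adjoin hw)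

theorem mem_veronese_iff {v : MvPolynomial (Fin 2) k} :
    v ∈ veronese k d ↔ ∀ n, ¬d ∣ n → homogeneousComponent n v = 0 := by
  constructor
  · intro hv n hn
    rw [veronese_eq_adjoin_range, Algebra.adjoin_range_eq_range_aeval] at hv
    obtain ⟨q, rfl⟩ := hv
    exact homogeneousComponent_aeval_of_not_dvd (fun i ↦ i.2) q hn
  · intro h
    rw [← sum_homogeneousComponent v]
    refine sum_mem fun n _ ↦ ?_
    by_cases hn : d ∣ n
    · obtain ⟨m, rfl⟩ := hn
      exact homogeneousSubmodule_le_veronese k d m (homogeneousComponent_isHomogeneous _ v)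
    · rw [h n hn]
      exact zero_mem _

theorem isGraded_veronese (hd : d ≠ 0) : IsGraded (Subalgebra.toSubmodule (veronese k d)) :=
  isGraded_adjoin hd fun _ h ↦ h

end Veronese

section PowerBasisDuality

variable {R S : Type*} [CommRing R] [CommRing S] [Algebra R S]

/-- The bilinear form `(a, s) ↦ τ (a * s)` of a linear functional `τ` on an algebra, seen as a
map to the dual module. -/
noncomputable def mulDual (τ : S →ₗ[R] R) : S →ₗ[R] Module.Dual R S :=
  (LinearMap.mul R S).compr₂ τ

theorem exists_forall_lt_apply_mul_gen_pow_eq {y : S} {n : ℕ} {τ : S →ₗ[R] R}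
    (hτ : ∀ i < n, τ (y ^ i) = 0) (hτn : τ (y ^ n) = 1) (φ : S →ₗ[R] R) {m : ℕ}
    (hm : m ≤ n + 1) : ∃ a, ∀ j < m, τ (a * y ^ j) = φ (y ^ j) := by
  induction m with
  | zero => exact ⟨0, fun j hj ↦ absurd hj (Nat.not_lt_zero j)⟩
  | succ m ih =>
    obtain ⟨a, ha⟩ := ih (by omega)
    refine ⟨a + (φ (y ^ m) - τ (a * y ^ m)) • y ^ (n - m), fun j hj ↦ ?_⟩
    rw [add_mul, smul_mul_assoc, ← pow_add, map_add, map_smul, smul_eq_mul]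
    rcases Nat.lt_succ_iff_lt_or_eq.mp hj with hlt | rfl
    · rw [hτ _ (by omega), mul_zero, add_zero, ha j hlt]
    · rw [Nat.sub_add_cancel (by omega), hτn]
      ring

/-- The Gram matrix `τ (y ^ (i + j))` is antitriangular with ones on the antidiagonal. -/
theorem bijective_mulDual_of_powerBasis {y : S} {n : ℕ} (b : Module.Basis (Fin (n + 1)) R S)
    (hb : ∀ i, b i = y ^ (i : ℕ)) : Function.Bijective (mulDual (b.coord (Fin.last n))) := by
  have coord_pow (i : Fin (n + 1)) :
      b.coord (Fin.last n) (y ^ (i : ℕ)) = if i = Fin.last n then 1 else 0 := by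
    rw [← hb, Module.Basis.coord_apply, Module.Basis.repr_self_apply]
  have hlt (i : ℕ) (hi : i < n) : b.coord (Fin.last n) (y ^ i) = 0 :=
    (coord_pow ⟨i, by omega⟩).trans (if_neg fun h ↦ hi.ne (congrArg Fin.val h))
  have hsurj : Function.Surjective (mulDual (b.coord (Fin.last n))) := by
    intro φ
    obtain ⟨a, ha⟩ := exists_forall_lt_apply_mul_gen_pow_eq hlt
      ((coord_pow (Fin.last n)).trans (if_pos rfl)) φ le_rfl
    exact ⟨a, b.ext fun i ↦ by rw [hb]; exact ha i i.2⟩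
  have := Module.Finite.of_basis b.dualBasis
  exact ⟨OrzechProperty.injective_of_surjective_of_injective b.toDual _ b.toDual_injective hsurj,
    hsurj⟩

end PowerBasisDuality

section ConductorDuality

variable {R B : Type*} [CommRing R] [CommRing B] [Algebra R B]

/-- The conductor `S : V = {x | x V ⊆ S}` of subalgebras `S` and `V` of a commutative algebra. -/
noncomputable def relConductor (S V : Subalgebra R B) : Submodule R B :=
  Subalgebra.toSubmodule S / Subalgebra.toSubmodule V

theorem mem_relConductor {S V : Subalgebra R B} {x : B} :
    x ∈ relConductor S V ↔ ∀ v ∈ V, x * v ∈ S :=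
  Submodule.mem_div_iff_forall_mul_mem

theorem relConductor_le (S V : Subalgebra R B) : relConductor S V ≤ Subalgebra.toSubmodule S :=
  fun x hx ↦ mul_one x ▸ mem_relConductor.mp hx 1 (one_mem V)

theorem mul_mem_relConductor {S V : Subalgebra R B} {x v : B} (hx : x ∈ relConductor S V)
    (hv : v ∈ V) : x * v ∈ relConductor S V :=
  mem_relConductor.mpr fun w hw ↦ mul_assoc x v w ▸ mem_relConductor.mp hx _ (mul_mem hv hw)

/-- A functional `τ` on `S` turns the conductor `S : V` into functionals on `V`, sending `x` to
`w ↦ τ (x * w)`. -/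
noncomputable def conductorDual {S : Subalgebra R B} (V : Subalgebra R B) (τ : S →ₗ[R] R) :
    relConductor S V →ₗ[R] Module.Dual R V :=
  LinearMap.mk₂ R (fun x w ↦ τ ⟨x * w, mem_relConductor.mp x.2 w w.2⟩)
    (fun x₁ x₂ w ↦ by rw [← map_add]; congr 2; exact add_mul _ _ _)
    (fun c x w ↦ by rw [← map_smul]; congr 2; exact smul_mul_assoc _ _ _)
    (fun x w₁ w₂ ↦ by rw [← map_add]; congr 2; exact mul_add _ _ _)
    (fun c x w ↦ by rw [← map_smul]; congr 2; exact mul_smul_comm _ _ _)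

theorem conductorDual_apply {S V : Subalgebra R B} (τ : S →ₗ[R] R) (x : relConductor S V) (w : V) :
    conductorDual V τ x w = τ ⟨x * w, mem_relConductor.mp x.2 w w.2⟩ :=
  rfl

theorem injective_conductorDual {S V : Subalgebra R B} (hSV : S ≤ V) {τ : S →ₗ[R] R}
    (hτ : Function.Injective (mulDual τ)) : Function.Injective (conductorDual V τ) := by
  rw [injective_iff_map_eq_zero]
  intro x hx
  have hx0 : (⟨x, relConductor_le S V x.2⟩ : S) = 0 :=
    (injective_iff_map_eq_zero _).mp hτ _ <| LinearMap.ext fun s ↦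
      LinearMap.congr_fun hx ⟨s, hSV s.2⟩
  exact Subtype.ext (show (x : B) = 0 from Subtype.ext_iff.mp hx0)

theorem surjective_conductorDual {S V : Subalgebra R B} (hSV : S ≤ V) {τ : S →ₗ[R] R}
    (hτ : Function.Bijective (mulDual τ)) {r : R} (hr : Function.Injective fun v : B ↦ r • v)
    (hrV : ∀ v ∈ V, r • v ∈ S) : Function.Surjective (conductorDual V τ) := by
  intro φ
  have exists_eq_mul (w : V) : ∃ a : S, ∀ s : S, τ (a * s) = φ (w * ⟨s, hSV s.2⟩) := by
    obtain ⟨a, ha⟩ := hτ.2 (φ ∘ₗ LinearMap.mulLeft R w ∘ₗ (Subalgebra.inclusion hSV).toLinearMap)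
    exact ⟨a, fun s ↦ LinearMap.congr_fun ha s⟩
  choose a ha using exists_eq_mul
  have mul_eq (w : V) : (a 1 : B) * w = a w := by
    have hS : a 1 * ⟨r • w, hrV w w.2⟩ = r • a w := hτ.1 <| LinearMap.ext fun s ↦ by
      change τ (a 1 * ⟨r • w, hrV w w.2⟩ * s) = τ (r • a w * s)
      rw [mul_assoc, ha, smul_mul_assoc, map_smul, ha, ← map_smul, one_mul]
      exact congrArg φ (Subtype.ext (smul_mul_assoc r (w : B) s))
    refine hr ?_
    exact (mul_smul_comm r _ _).symm.trans (Subtype.ext_iff.mp hS)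
  refine ⟨⟨a 1, mem_relConductor.mpr fun v hv ↦ mul_eq ⟨v, hv⟩ ▸ (a ⟨v, hv⟩).2⟩,
    LinearMap.ext fun w ↦ ?_⟩
  rw [conductorDual_apply]
  have hmem : (⟨a 1 * w, mul_eq w ▸ (a w).2⟩ : S) = a w * 1 :=
    Subtype.ext ((mul_eq w).trans (mul_one _).symm)
  exact (congrArg τ hmem).trans ((ha w 1).trans (congrArg φ (mul_one w)))

end ConductorDuality

theorem span_range_coe_basis {ι R M : Type*} [Semiring R] [AddCommMonoid M] [Module R M]
    {N : Submodule R M} (b : Module.Basis ι R N) :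
    Submodule.span R (Set.range fun i ↦ (b i : M)) = N := by
  have h := congrArg (Submodule.map N.subtype) b.span_eq
  rwa [Submodule.map_span, Submodule.map_subtype_top, ← Set.range_comp] at h

theorem linearIndependent_coe_basis {ι R M : Type*} [Ring R] [AddCommGroup M] [Module R M]
    {N : Submodule R M} (b : Module.Basis ι R N) : LinearIndependent R fun i ↦ (b i : M) :=
  b.linearIndependent.map' N.subtype N.ker_subtype

section GradedModules

variable {σ k ι : Type*} [Field k]

/-- The degree `n` part of the shift `N(-a)` of a graded subspace `N`: the forms of degree `n - a`
in `N`, and zero if `n < a`. -/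
noncomputable def shiftedPart (N : Submodule k (MvPolynomial σ k)) (a n : ℕ) :
    Submodule k (MvPolynomial σ k) :=
  if a ≤ n then N ⊓ homogeneousSubmodule σ k (n - a) else ⊥

theorem shiftedPart_of_le (N : Submodule k (MvPolynomial σ k)) {a n : ℕ} (h : a ≤ n) :
    shiftedPart N a n = N ⊓ homogeneousSubmodule σ k (n - a) :=
  if_pos h

theorem shiftedPart_of_lt (N : Submodule k (MvPolynomial σ k)) {a n : ℕ} (h : n < a) :
    shiftedPart N a n = ⊥ :=
  if_neg h.not_ge

theorem finrank_shiftedPart (N : Submodule k (MvPolynomial σ k)) (a n : ℕ) :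
    Module.finrank k (shiftedPart N a n) = if a ≤ n then hilbertFunction N (n - a) else 0 := by
  by_cases h : a ≤ n
  · rw [shiftedPart_of_le N h, if_pos h, hilbertFunction]
  · rw [shiftedPart_of_lt N (not_le.mp h), if_neg h, finrank_bot]

instance finite_shiftedPart [Finite σ] (N : Submodule k (MvPolynomial σ k)) (a n : ℕ) :
    Module.Finite k (shiftedPart N a n) := by
  by_cases h : a ≤ n
  · rw [shiftedPart_of_le N h]
    infer_instance
  · rw [shiftedPart_of_lt N (not_le.mp h)]
    infer_instance

theorem mul_isHomogeneous_of_mem_shiftedPart {N : Submodule k (MvPolynomial σ k)} {a n : ℕ}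
    {p v : MvPolynomial σ k} (hp : p ∈ shiftedPart N a n) (hv : v.IsHomogeneous a) :
    (p * v).IsHomogeneous n := by
  unfold shiftedPart at hp
  split_ifs at hp with h
  · exact Nat.sub_add_cancel h ▸ hp.2.mul hv
  · rw [(Submodule.mem_bot k).mp hp, zero_mul]
    exact isHomogeneous_zero σ k n

theorem shiftedPart_le (N : Submodule k (MvPolynomial σ k)) (a n : ℕ) : shiftedPart N a n ≤ N := by
  unfold shiftedPart
  split_ifs
  exacts [inf_le_left, bot_le]

theorem ite_homogeneousComponent_mem_shiftedPart {N : Submodule k (MvPolynomial σ k)}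
    (hN : IsGraded N) {p : MvPolynomial σ k} (hp : p ∈ N) (a n : ℕ) :
    (if a ≤ n then homogeneousComponent (n - a) p else 0) ∈ shiftedPart N a n := by
  unfold shiftedPart
  split_ifs
  exacts [⟨hN p hp _, homogeneousComponent_isHomogeneous _ _⟩, zero_mem _]

variable [Fintype ι] {R : Subalgebra k (MvPolynomial σ k)} {v : ι → MvPolynomial σ k} {e : ι → ℕ}

theorem homogeneousComponent_sum_smul (hv : ∀ i, (v i).IsHomogeneous (e i)) (p : ι → R)
    (n : ℕ) : homogeneousComponent n (∑ i, p i • v i) = ∑ i,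
      (if e i ≤ n then homogeneousComponent (n - e i) (p i : MvPolynomial σ k) else 0) * v i := by
  rw [map_sum]
  refine Finset.sum_congr rfl fun i _ ↦ ?_
  rw [Subalgebra.smul_def, smul_eq_mul, mul_comm,
    homogeneousComponent_mul_of_isHomogeneous_left (hv i), ite_mul, zero_mul, mul_comm]

/-- The degree `n` part of the map `⨁ R(-e i) → MvPolynomial σ k` given by the forms `v i`. -/
noncomputable def shiftedSum (R : Subalgebra k (MvPolynomial σ k)) (v : ι → MvPolynomial σ k)
    (e : ι → ℕ) (n : ℕ) :
    (∀ i, shiftedPart (Subalgebra.toSubmodule R) (e i) n) →ₗ[k] MvPolynomial σ k :=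
  ∑ i, LinearMap.mulRight k (v i) ∘ₗ Submodule.subtype _ ∘ₗ LinearMap.proj i

theorem shiftedSum_apply (n : ℕ) (p : ∀ i, shiftedPart (Subalgebra.toSubmodule R) (e i) n) :
    shiftedSum R v e n p = ∑ i, (p i : MvPolynomial σ k) * v i := by
  simp only [shiftedSum, LinearMap.sum_apply, LinearMap.comp_apply, LinearMap.proj_apply,
    Submodule.subtype_apply, LinearMap.mulRight_apply]

theorem range_shiftedSum (hR : IsGraded (Subalgebra.toSubmodule R))
    (hv : ∀ i, (v i).IsHomogeneous (e i)) (n : ℕ) : LinearMap.range (shiftedSum R v e n) =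
      (Submodule.span R (Set.range v)).restrictScalars k ⊓ homogeneousSubmodule σ k n := by
  apply le_antisymm
  · rintro _ ⟨p, rfl⟩
    rw [shiftedSum_apply]
    refine ⟨Submodule.sum_mem _ fun i _ ↦ ?_,
      Submodule.sum_mem _ fun i _ ↦ mul_isHomogeneous_of_mem_shiftedPart (p i).2 (hv i)⟩
    exact Submodule.smul_mem (Submodule.span R (Set.range v))
      (⟨p i, shiftedPart_le _ _ _ (p i).2⟩ : R) (Submodule.subset_span ⟨i, rfl⟩)
  · rintro w ⟨hw, hwn⟩
    obtain ⟨p, rfl⟩ := (Submodule.mem_span_range_iff_exists_fun R).mp hw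
    refine ⟨fun i ↦ ⟨_, ite_homogeneousComponent_mem_shiftedPart hR (p i).2 (e i) n⟩, ?_⟩
    rw [shiftedSum_apply, ← homogeneousComponent_sum_smul hv]
    exact homogeneousComponent_eq_self hwn

theorem hilbertFunction_span_le [Finite σ] (hR : IsGraded (Subalgebra.toSubmodule R))
    (hv : ∀ i, (v i).IsHomogeneous (e i)) (n : ℕ) :
    hilbertFunction ((Submodule.span R (Set.range v)).restrictScalars k) n ≤
      ∑ i, if e i ≤ n then hilbertFunction (Subalgebra.toSubmodule R) (n - e i) else 0 := by
  simp_rw [← finrank_shiftedPart]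
  rw [hilbertFunction, ← range_shiftedSum hR hv, ← Module.finrank_pi_fintype]
  exact LinearMap.finrank_range_le _

theorem injective_shiftedSum (h : LinearIndependent R v) (n : ℕ) :
    Function.Injective (shiftedSum R v e n) := by
  rw [injective_iff_map_eq_zero]
  intro p hp
  rw [shiftedSum_apply] at hp
  have := Fintype.linearIndependent_iff.mp h (fun i ↦ ⟨p i, shiftedPart_le _ _ _ (p i).2⟩) hp
  exact _root_.funext fun i ↦ Subtype.ext (show (p i : MvPolynomial σ k) = 0 from
    Subtype.ext_iff.mp (this i))

theorem linearIndependent_of_injective_shiftedSum (hR : IsGraded (Subalgebra.toSubmodule R))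
    (hv : ∀ i, (v i).IsHomogeneous (e i))
    (h : ∀ n, Function.Injective (shiftedSum R v e n)) : LinearIndependent R v := by
  rw [Fintype.linearIndependent_iff]
  intro p hp i
  refine Subtype.ext (ext_homogeneousComponent fun n ↦ ?_)
  have hzero := (injective_iff_map_eq_zero _).mp (h (e i + n))
    (fun j ↦ ⟨_, ite_homogeneousComponent_mem_shiftedPart hR (p j).2 (e j) (e i + n)⟩) <| by
    rw [shiftedSum_apply, ← homogeneousComponent_sum_smul hv, hp, map_zero]
  simpa using Subtype.ext_iff.mp (congrFun hzero i)

variable [Finite σ]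

theorem hilbertFunction_span_of_linearIndependent (hR : IsGraded (Subalgebra.toSubmodule R))
    (hv : ∀ i, (v i).IsHomogeneous (e i)) (h : LinearIndependent R v) (n : ℕ) :
    hilbertFunction ((Submodule.span R (Set.range v)).restrictScalars k) n =
      ∑ i, if e i ≤ n then hilbertFunction (Subalgebra.toSubmodule R) (n - e i) else 0 := by
  rw [hilbertFunction, ← range_shiftedSum hR hv,
    LinearMap.finrank_range_of_inj (injective_shiftedSum h n), Module.finrank_pi_fintype]
  exact Finset.sum_congr rfl fun i _ ↦ finrank_shiftedPart _ _ _

theorem linearIndependent_of_sum_le_hilbertFunction_span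
    (hR : IsGraded (Subalgebra.toSubmodule R)) (hv : ∀ i, (v i).IsHomogeneous (e i))
    (h : ∀ n, ∑ i, (if e i ≤ n then hilbertFunction (Subalgebra.toSubmodule R) (n - e i) else 0) ≤
      hilbertFunction ((Submodule.span R (Set.range v)).restrictScalars k) n) :
    LinearIndependent R v := by
  refine linearIndependent_of_injective_shiftedSum hR hv fun n ↦ LinearMap.ker_eq_bot.mp ?_
  have hrank := LinearMap.finrank_range_add_finrank_ker (shiftedSum R v e n)
  have hn := h n
  rw [range_shiftedSum hR hv] at hrank
  simp only [Module.finrank_pi_fintype, finrank_shiftedPart] at hrank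
  unfold hilbertFunction at hrank hn
  exact Submodule.finrank_eq_zero.mp (by omega)

end GradedModules

theorem exists_sup_span_range_eq {K W : Type*} [DivisionRing K] [AddCommGroup W] [Module K W]
    {F H : Submodule K W} [Module.Finite K H] {D : ℕ} (hFH : F ≤ H)
    (h : Module.finrank K H = Module.finrank K F + D) :
    ∃ u : Fin D → W, (∀ i, u i ∈ H) ∧ F ⊔ Submodule.span K (Set.range u) = H := by
  obtain ⟨Q, hQ⟩ := F.exists_isCompl
  have : Module.Finite K F := Submodule.finiteDimensional_of_le hFH
  have hsup : F ⊔ Q ⊓ H = H := by rw [← sup_inf_assoc_of_le Q hFH, hQ.sup_eq_top, top_inf_eq]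
  have hdim : Module.finrank K ↥(Q ⊓ H) = D := by
    have := Submodule.finrank_sup_add_finrank_inf_eq F (Q ⊓ H)
    rw [hsup, ← inf_assoc, hQ.inf_eq_bot, bot_inf_eq, finrank_bot] at this
    omega
  let b := Module.finBasisOfFinrankEq K ↥(Q ⊓ H) hdim
  exact ⟨fun i ↦ b i, fun i ↦ (b i).2.2, by rw [span_range_coe_basis, hsup]⟩

section ParameterSystems

/-- The subring `k[f]` generated by a family of polynomials, over which `k[x,y]` is a finite module
when `f` is a homogeneous system of parameters. -/
noncomputable abbrev paramRing {k : Type*} [Field k] (f : Fin 2 → MvPolynomial (Fin 2) k) :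
    Subalgebra k (MvPolynomial (Fin 2) k) :=
  Algebra.adjoin k (Set.range f)

/-- The `d`-th Veronese subring, as an algebra over a subring `k[f]` generated by forms of degree
`d`. -/
noncomputable def veroneseOver {k : Type*} [Field k] (d : ℕ)
    (f : Fin 2 → MvPolynomial (Fin 2) k) :
    Subalgebra (paramRing f) (MvPolynomial (Fin 2) k) :=
  Algebra.adjoin (paramRing f) {w | w.IsHomogeneous d}

variable {k : Type*} [Field k] {d : ℕ} {f : Fin 2 → MvPolynomial (Fin 2) k}

/-- A homogeneous system of parameters of `k[x,y]`: two coprime forms of the same positive degree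
`d`. -/
structure IsParameterSystem (d : ℕ) (f : Fin 2 → MvPolynomial (Fin 2) k) : Prop where
  pos : 0 < d
  isHomogeneous : ∀ i, (f i).IsHomogeneous d
  isRelPrime : IsRelPrime (f 0) (f 1)

namespace IsParameterSystem

theorem ne_zero_one (hf : IsParameterSystem d f) : f 1 ≠ 0 := by
  intro h
  have hunit : IsUnit (f 0) := hf.isRelPrime dvd_rfl (by rw [h]; exact dvd_zero _)
  have hdeg := (isUnit_iff_totalDegree_of_isReduced.mp hunit).2
  rw [(hf.isHomogeneous 0).totalDegree hunit.ne_zero] at hdeg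
  exact hf.pos.ne' hdeg

theorem exists_isHomogeneous_eq_sum (hf : IsParameterSystem d f) {n : ℕ}
    {w : MvPolynomial (Fin 2) k} (hw : w.IsHomogeneous (d * (n + 2))) :
    ∃ a : Fin 2 → MvPolynomial (Fin 2) k,
      (∀ i, (a i).IsHomogeneous (d * (n + 1))) ∧ w = ∑ i, f i * a i := by
  have hle : d + (d - 1) ≤ d * (n + 2) :=
    calc d + (d - 1) ≤ d * 2 := by omega
      _ ≤ d * (n + 2) := Nat.mul_le_mul_left d (Nat.le_add_left 2 n)
  have hrange : Set.range f = {f 0, f 1} := by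
    ext
    simp only [Set.mem_range, Fin.exists_fin_two, Set.mem_insert_iff, Set.mem_singleton_iff,
      eq_comm]
  have hmem : w ∈ Ideal.span (Set.range f) := by
    rw [hrange]
    exact idealOfVars_pow_le_span_pair_of_isRelPrime hf.pos (hf.isHomogeneous 0)
      (hf.isHomogeneous 1) hf.ne_zero_one hf.isRelPrime
      (Ideal.pow_le_pow_right hle (mem_idealOfVars_pow_of_isHomogeneous hw))
  exact exists_isHomogeneous_eq_sum_of_mem_span hf.isHomogeneous (by convert hw using 1; ring) hmem

theorem linearIndependent (hf : IsParameterSystem d f) : LinearIndependent k f := by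
  rw [Fintype.linearIndependent_iff]
  intro c hc
  rw [Fin.sum_univ_two, smul_eq_C_mul, smul_eq_C_mul, mul_comm, mul_comm (C _)] at hc
  have := eq_zero_of_mul_add_mul_eq_zero hf.pos (hf.isHomogeneous 1) hf.ne_zero_one hf.isRelPrime
    (isHomogeneous_C _ (c 0)) hc
  simpa [Fin.forall_fin_two] using this

theorem exists_sup_span_range_eq_homogeneousSubmodule {D : ℕ} (hf : IsParameterSystem (D + 1) f) :
    ∃ u : Fin D → MvPolynomial (Fin 2) k, (∀ i, (u i).IsHomogeneous (D + 1)) ∧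
      Submodule.span k (Set.range f) ⊔ Submodule.span k (Set.range u) =
        homogeneousSubmodule (Fin 2) k (D + 1) := by
  have hle : Submodule.span k (Set.range f) ≤ homogeneousSubmodule (Fin 2) k (D + 1) :=
    Submodule.span_le.mpr (Set.range_subset_iff.mpr hf.isHomogeneous)
  refine exists_sup_span_range_eq hle ?_
  rw [finrank_homogeneousSubmodule_fin_two, finrank_span_eq_card hf.linearIndependent,
    Fintype.card_fin]
  ring

theorem restrictScalars_veroneseOver (hf : IsParameterSystem d f) :
    (veroneseOver d f).restrictScalars k = veronese k d := by
  rw [veroneseOver, ← Algebra.adjoin_union_eq_adjoin_adjoin, veronese,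
    Set.union_eq_self_of_subset_left]
  exact Set.range_subset_iff.mpr hf.isHomogeneous

theorem mem_veroneseOver (hf : IsParameterSystem d f) {w : MvPolynomial (Fin 2) k} :
    w ∈ veroneseOver d f ↔ w ∈ veronese k d := by
  rw [← hf.restrictScalars_veroneseOver, Subalgebra.mem_restrictScalars]

variable {D : ℕ} {u : Fin D → MvPolynomial (Fin 2) k}

theorem mem_span_range_cons (hf : IsParameterSystem d f)
    (hsup : Submodule.span k (Set.range f) ⊔ Submodule.span k (Set.range u) =
      homogeneousSubmodule (Fin 2) k d) (n : ℕ) :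
    homogeneousSubmodule (Fin 2) k (d * n) ≤ (Submodule.span (paramRing f)
      (Set.range (Fin.cons 1 u : Fin (D + 1) → MvPolynomial (Fin 2) k))).restrictScalars k := by
  set N := Submodule.span (paramRing f)
    (Set.range (Fin.cons 1 u : Fin (D + 1) → MvPolynomial (Fin 2) k))
  have mul_mem (i : Fin 2) {w : MvPolynomial (Fin 2) k} (hw : w ∈ N) : f i * w ∈ N :=
    N.smul_mem (⟨f i, Algebra.subset_adjoin ⟨i, rfl⟩⟩ : paramRing f) hw
  have one_mem : 1 ∈ N := Submodule.subset_span ⟨0, rfl⟩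
  induction n using Nat.twoStepInduction with
  | zero =>
    rw [mul_zero, homogeneousSubmodule_zero]
    exact Submodule.one_le.mpr one_mem
  | one =>
    rw [mul_one, ← hsup, sup_le_iff, Submodule.span_le, Submodule.span_le, Set.range_subset_iff,
      Set.range_subset_iff]
    exact ⟨fun i ↦ mul_one (f i) ▸ mul_mem i one_mem,
      fun i ↦ Submodule.subset_span ⟨i.succ, rfl⟩⟩
  | more n _ ih =>
    intro w hw
    obtain ⟨a, ha, rfl⟩ := hf.exists_isHomogeneous_eq_sum hw
    exact N.sum_mem fun i _ ↦ mul_mem i (ih (ha i))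

theorem toSubmodule_veroneseOver (hf : IsParameterSystem d f) (hu : ∀ i, (u i).IsHomogeneous d)
    (hsup : Submodule.span k (Set.range f) ⊔ Submodule.span k (Set.range u) =
      homogeneousSubmodule (Fin 2) k d) :
    Subalgebra.toSubmodule (veroneseOver d f) = Submodule.span (paramRing f)
      (Set.range (Fin.cons 1 u : Fin (D + 1) → MvPolynomial (Fin 2) k)) := by
  apply le_antisymm
  · intro w hw
    rw [Subalgebra.mem_toSubmodule, hf.mem_veroneseOver, mem_veronese_iff] at hw
    rw [← sum_homogeneousComponent w]
    refine sum_mem fun n _ ↦ ?_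
    by_cases hn : d ∣ n
    · obtain ⟨m, rfl⟩ := hn
      exact hf.mem_span_range_cons hsup m (homogeneousComponent_isHomogeneous _ w)
    · rw [hw n hn]
      exact zero_mem _
  · rw [Submodule.span_le, Fin.range_cons, Set.insert_subset_iff, Set.range_subset_iff]
    exact ⟨one_mem (veroneseOver d f), fun i ↦ Algebra.subset_adjoin (hu i)⟩

end IsParameterSystem

end ParameterSystems

section HilbertFunctionsOverParameterRings

variable {k : Type*} [Field k] {d : ℕ} {f : Fin 2 → MvPolynomial (Fin 2) k}

theorem hilbertFunction_veronese (k : Type*) [Field k] (d n : ℕ) :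
    hilbertFunction (Subalgebra.toSubmodule (veronese k d)) (d * n) = d * n + 1 := by
  rw [hilbertFunction, inf_eq_right.mpr (homogeneousSubmodule_le_veronese k d n),
    finrank_homogeneousSubmodule_fin_two]

namespace IsParameterSystem

theorem isGraded_paramRing (hf : IsParameterSystem d f) :
    IsGraded (Subalgebra.toSubmodule (paramRing f)) :=
  isGraded_adjoin hf.pos.ne' (Set.forall_mem_range.mpr hf.isHomogeneous)

theorem hilbertFunction_veronese_le {D : ℕ} (hf : IsParameterSystem (D + 1) f) (n : ℕ) :
    hilbertFunction (Subalgebra.toSubmodule (veronese k (D + 1))) ((D + 1) * (n + 1)) ≤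
      hilbertFunction (Subalgebra.toSubmodule (paramRing f)) ((D + 1) * (n + 1)) +
        D * hilbertFunction (Subalgebra.toSubmodule (paramRing f)) ((D + 1) * n) := by
  obtain ⟨u, hu, hsup⟩ := hf.exists_sup_span_range_eq_homogeneousSubmodule
  have hv (i) : (Fin.cons 1 u : Fin (D + 1) → MvPolynomial (Fin 2) k) i |>.IsHomogeneous
      ((Fin.cons 0 fun _ ↦ D + 1 : Fin (D + 1) → ℕ) i) :=
    Fin.cases (isHomogeneous_one _ _) hu i
  have h := hilbertFunction_span_le hf.isGraded_paramRing hv ((D + 1) * (n + 1))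
  rw [← hf.toSubmodule_veroneseOver hu hsup, ← Subalgebra.restrictScalars_toSubmodule,
    hf.restrictScalars_veroneseOver, Fin.sum_univ_succ] at h
  simpa [mul_add] using h

theorem hilbertFunction_paramRing (hf : IsParameterSystem d f) (n : ℕ) :
    hilbertFunction (Subalgebra.toSubmodule (paramRing f)) (d * n) = n + 1 := by
  have hle (m) := (hilbertFunction_adjoin_le hf.pos.ne' hf.isHomogeneous m).trans_eq
    (finrank_homogeneousSubmodule_fin_two m)
  obtain ⟨D, rfl⟩ := Nat.exists_eq_add_one_of_ne_zero hf.pos.ne'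
  refine (hle n).antisymm ?_
  cases n with
  | zero =>
    exact Submodule.one_le_finrank_iff.mpr <| (Submodule.ne_bot_iff _).mpr
      ⟨1, ⟨one_mem (paramRing f), isHomogeneous_one _ _⟩, one_ne_zero⟩
  | succ n =>
    have h := hf.hilbertFunction_veronese_le n
    rw [hilbertFunction_veronese] at h
    nlinarith [hle n]

theorem algebraicIndependent (hf : IsParameterSystem d f) : AlgebraicIndependent k f :=
  algebraicIndependent_of_le_hilbertFunction hf.pos.ne' hf.isHomogeneous fun n ↦ by
    rw [finrank_homogeneousSubmodule_fin_two, hf.hilbertFunction_paramRing]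

variable {ι : Type*} [Fintype ι] {v : ι → MvPolynomial (Fin 2) k} {e : ι → ℕ}

theorem shifted_hilbertFunction_paramRing (hf : IsParameterSystem d f) (a n : ℕ) :
    (if d * a ≤ d * n then
      hilbertFunction (Subalgebra.toSubmodule (paramRing f)) (d * n - d * a) else 0) =
      n + 1 - a := by
  simp only [← Nat.mul_sub, hf.hilbertFunction_paramRing, Nat.mul_le_mul_left_iff hf.pos]
  split_ifs <;> omega

theorem hilbertFunction_restrictScalars (hf : IsParameterSystem d f)
    {N : Submodule (paramRing f) (MvPolynomial (Fin 2) k)} (b : Module.Basis ι (paramRing f) N)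
    (hb : ∀ i, (b i : MvPolynomial (Fin 2) k).IsHomogeneous (d * e i)) (n : ℕ) :
    hilbertFunction (N.restrictScalars k) (d * n) = ∑ i, (n + 1 - e i) := by
  rw [← span_range_coe_basis b, hilbertFunction_span_of_linearIndependent hf.isGraded_paramRing hb
    (linearIndependent_coe_basis b)]
  simp_rw [hf.shifted_hilbertFunction_paramRing]

theorem linearIndependent_of_sum_le (hf : IsParameterSystem d f)
    (hv : ∀ i, (v i).IsHomogeneous (d * e i)) (h : ∀ n, ∑ i, (n + 1 - e i) ≤
      hilbertFunction ((Submodule.span (paramRing f) (Set.range v)).restrictScalars k) (d * n)) :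
    LinearIndependent (paramRing f) v := by
  refine linearIndependent_of_sum_le_hilbertFunction_span hf.isGraded_paramRing hv fun n ↦ ?_
  by_cases hn : d ∣ n
  · obtain ⟨m, rfl⟩ := hn
    simp_rw [hf.shifted_hilbertFunction_paramRing]
    exact h m
  · refine (Finset.sum_eq_zero fun i _ ↦ ?_).trans_le (Nat.zero_le _)
    split_ifs with hle
    · refine hilbertFunction_adjoin_of_not_dvd hf.isHomogeneous fun hdvd ↦ hn ?_
      exact (Nat.sub_add_cancel hle) ▸ hdvd.add (dvd_mul_right d (e i))
    · rfl

end IsParameterSystem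

end HilbertFunctionsOverParameterRings

section GradedConductor

variable {σ k : Type*} [Field k]

theorem isGraded_relConductor {S V : Subalgebra k (MvPolynomial σ k)}
    (hS : IsGraded (Subalgebra.toSubmodule S)) (hV : IsGraded (Subalgebra.toSubmodule V)) :
    IsGraded (relConductor S V) := by
  intro x hx m
  refine mem_relConductor.mpr fun w hw ↦ ?_
  rw [← sum_homogeneousComponent w, Finset.mul_sum]
  refine sum_mem fun l _ ↦ ?_
  have hmul : homogeneousComponent m x * homogeneousComponent l w =
      homogeneousComponent (l + m) (homogeneousComponent l w * x) := by
    rw [homogeneousComponent_add_mul_of_isHomogeneous_left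
      (homogeneousComponent_isHomogeneous l w), mul_comm]
  rw [hmul, mul_comm]
  exact hS _ (mem_relConductor.mp hx _ (hV w hw l)) _

theorem coe_repr_of_eq_homogeneousComponent {ι N : Type*} [Finite ι] {e : ι → ℕ}
    {R : Subalgebra k (MvPolynomial σ k)} (hR : IsGraded (Subalgebra.toSubmodule R))
    [AddCommMonoid N] [Module R N] {φ : N →ₗ[R] MvPolynomial σ k} (hφ : Function.Injective φ)
    (b : Module.Basis ι R N) (hb : ∀ i, (φ (b i)).IsHomogeneous (e i)) {x x' : N} {n : ℕ}
    (hx : φ x' = homogeneousComponent n (φ x)) (i : ι) :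
    (b.repr x' i : MvPolynomial σ k) =
      if e i ≤ n then homogeneousComponent (n - e i) (b.repr x i : MvPolynomial σ k) else 0 := by
  have := Fintype.ofFinite ι
  let q (i : ι) : R := ⟨_, shiftedPart_le _ _ _
    (ite_homogeneousComponent_mem_shiftedPart hR (b.repr x i).2 (e i) n)⟩
  have hq : x' = ∑ i, q i • b i := by
    have hxsum : φ x = ∑ i, b.repr x i • φ (b i) := by
      conv_lhs => rw [← b.sum_repr x]
      simp only [map_sum, map_smul]
    refine hφ ?_
    rw [hx, hxsum, homogeneousComponent_sum_smul hb]
    simp only [map_sum, map_smul]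
    rfl
  rw [hq, b.repr_sum_self]

end GradedConductor

theorem finrank_eq_of_forall_smul_mem {R M : Type*} [CommRing R] [IsDomain R] [AddCommGroup M]
    [Module R M] {S V : Submodule R M} [Module.Finite R S] [Module.Finite R V] (hSV : S ≤ V) {r : R}
    (hr : Function.Injective fun m : M ↦ r • m) (hrV : ∀ v ∈ V, r • v ∈ S) :
    Module.finrank R S = Module.finrank R V := by
  let T : V →ₗ[R] S := (LinearMap.lsmul R M r).restrict hrV
  have hT : Function.Injective T := fun v w h ↦ Subtype.ext (hr (Subtype.ext_iff.mp h))
  exact (LinearMap.finrank_le_finrank_of_injective (Submodule.inclusion_injective hSV)).antisymm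
    (LinearMap.finrank_le_finrank_of_injective hT)

section ConductorOverParameterRings

variable {k : Type*} [Field k] {d D : ℕ} {f : Fin 2 → MvPolynomial (Fin 2) k}

namespace IsParameterSystem

theorem exists_basis_veroneseOver (hf : IsParameterSystem (D + 1) f) :
    ∃ b : Module.Basis (Fin (D + 1)) (paramRing f) (veroneseOver (D + 1) f),
      ∀ i, (b i : MvPolynomial (Fin 2) k).IsHomogeneous
        ((D + 1) * (Fin.cons 0 (fun _ ↦ 1) : Fin (D + 1) → ℕ) i) := by
  obtain ⟨u, hu, hsup⟩ := hf.exists_sup_span_range_eq_homogeneousSubmodule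
  have hspan := hf.toSubmodule_veroneseOver hu hsup
  have hv (i) : (Fin.cons 1 u : Fin (D + 1) → MvPolynomial (Fin 2) k) i |>.IsHomogeneous
      ((D + 1) * (Fin.cons 0 (fun _ ↦ 1) : Fin (D + 1) → ℕ) i) :=
    Fin.cases (isHomogeneous_one _ _) (fun i ↦ (mul_one (D + 1)).symm ▸ hu i) i
  have hind : LinearIndependent (paramRing f)
      (Fin.cons 1 u : Fin (D + 1) → MvPolynomial (Fin 2) k) := by
    refine hf.linearIndependent_of_sum_le hv fun n ↦ ?_
    rw [← hspan, ← Subalgebra.restrictScalars_toSubmodule, hf.restrictScalars_veroneseOver,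
      hilbertFunction_veronese, Fin.sum_univ_succ]
    simp only [Fin.cons_zero, Fin.cons_succ, Finset.sum_const, Finset.card_fin, smul_eq_mul]
    rw [Nat.sub_zero, Nat.add_sub_cancel]
    linarith
  refine ⟨(Module.Basis.span hind).map (LinearEquiv.ofEq _ _ hspan.symm), fun i ↦ ?_⟩
  rw [Module.Basis.map_apply, LinearEquiv.coe_ofEq_apply, Module.Basis.span_apply]
  exact hv i

theorem isIntegrallyClosed_paramRing (hf : IsParameterSystem d f) :
    IsIntegrallyClosed (paramRing f) :=
  IsIntegrallyClosed.of_equiv hf.algebraicIndependent.aevalEquiv.toRingEquiv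

variable {y : MvPolynomial (Fin 2) k}

theorem adjoin_le_veroneseOver (d : ℕ) (f : Fin 2 → MvPolynomial (Fin 2) k)
    (hy : y.IsHomogeneous d) : Algebra.adjoin (paramRing f) {y} ≤ veroneseOver d f :=
  Algebra.adjoin_mono (Set.singleton_subset_iff.mpr hy)

theorem finrank_adjoin_singleton (hf : IsParameterSystem (D + 1) f)
    (hy : y.IsHomogeneous (D + 1)) (hyint : IsIntegral (paramRing f) y)
    {r : paramRing f} (hr : r ≠ 0)
    (hrV : ∀ v ∈ veroneseOver (D + 1) f, r • v ∈ Algebra.adjoin (paramRing f) {y}) :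
    Module.finrank (paramRing f) (Algebra.adjoin (paramRing f) {y}) = D + 1 := by
  obtain ⟨b, -⟩ := hf.exists_basis_veroneseOver
  have := Module.Finite.of_basis b
  have := hf.isIntegrallyClosed_paramRing
  have := (Algebra.adjoin.powerBasis' hyint).finite
  rw [← Fintype.card_fin (D + 1), ← Module.finrank_eq_card_basis b]
  exact finrank_eq_of_forall_smul_mem
    (S := Subalgebra.toSubmodule (Algebra.adjoin (paramRing f) {y}))
    (V := Subalgebra.toSubmodule (veroneseOver (D + 1) f))
    (adjoin_le_veroneseOver _ f hy) (smul_right_injective _ hr) hrV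

theorem exists_powerBasis_adjoin_singleton (hf : IsParameterSystem (D + 1) f)
    (hy : y.IsHomogeneous (D + 1)) {r : paramRing f} (hr : r ≠ 0)
    (hrV : ∀ v ∈ veroneseOver (D + 1) f, r • v ∈ Algebra.adjoin (paramRing f) {y}) :
    ∃ b : Module.Basis (Fin (D + 1)) (paramRing f) (Algebra.adjoin (paramRing f) {y}),
      ∀ i, b i = ⟨y, Algebra.self_mem_adjoin_singleton _ y⟩ ^ (i : ℕ) := by
  obtain ⟨b, -⟩ := hf.exists_basis_veroneseOver
  have := Module.Finite.of_basis b
  have := hf.isIntegrallyClosed_paramRing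
  have hyint : IsIntegral (paramRing f) y :=
    (Algebra.IsIntegral.isIntegral (R := paramRing f)
      (⟨y, Algebra.subset_adjoin hy⟩ : veroneseOver (D + 1) f)).map (veroneseOver (D + 1) f).val
  let p := Algebra.adjoin.powerBasis' hyint
  have hdim : p.dim = D + 1 := p.finrank.symm.trans (hf.finrank_adjoin_singleton hy hyint hr hrV)
  refine ⟨p.basis.reindex (finCongr hdim), fun i ↦ ?_⟩
  rw [Module.Basis.reindex_apply, p.basis_eq_pow, Algebra.adjoin.powerBasis'_gen]
  rfl

end IsParameterSystem

end ConductorOverParameterRings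

section HilbertFunctionOfConductor

/-- The basis of the conductor is dual to that of `V`; it is homogeneous because the coordinate `l`
on `S` is a homogeneous functional. -/
theorem exists_basis_relConductor_of_bijective {σ k ι κ : Type*} [Field k] [Finite ι] [Finite κ]
    {R : Subalgebra k (MvPolynomial σ k)} (hR : IsGraded (Subalgebra.toSubmodule R))
    {S V : Subalgebra R (MvPolynomial σ k)}
    (hc : IsGraded ((relConductor S V).restrictScalars k)) {e' : κ → ℕ} {e : ι → ℕ}
    (p : Module.Basis κ R S) (hp : ∀ j, (p j : MvPolynomial σ k).IsHomogeneous (e' j))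
    (v : Module.Basis ι R V) (hv : ∀ i, (v i : MvPolynomial σ k).IsHomogeneous (e i)) (l : κ)
    (hl : ∀ i, e i ≤ e' l) (hbij : Function.Bijective (conductorDual V (p.coord l))) :
    ∃ b : Module.Basis ι R (relConductor S V),
      ∀ i, (b i : MvPolynomial σ k).IsHomogeneous (e' l - e i) := by
  classical
  let E := LinearEquiv.ofBijective (conductorDual V (p.coord l)) hbij
  refine ⟨v.dualBasis.map E.symm, fun i ↦ isHomogeneous_of_homogeneousComponent_eq_zero
    fun m hm ↦ ?_⟩
  set a := v.dualBasis.map E.symm i with ha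
  have hEa : E a = v.dualBasis i := by rw [ha, Module.Basis.map_apply, E.apply_symm_apply]
  have hzero : conductorDual V (p.coord l) ⟨_, hc _ a.2 m⟩ = 0 := by
    refine v.ext fun j ↦ Subtype.ext ?_
    let x : S := ⟨_, mem_relConductor.mp a.2 _ (v j).2⟩
    let x' : S := ⟨_, mem_relConductor.mp (hc _ a.2 m) _ (v j).2⟩
    have hone : p.repr x l = if j = i then 1 else 0 := by
      have := LinearMap.congr_fun hEa (v j)
      rwa [Module.Basis.dualBasis_apply_self] at this
    have hx : S.val.toLinearMap x' = homogeneousComponent (e j + m) (S.val.toLinearMap x) := by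
      change homogeneousComponent m (a : MvPolynomial σ k) * (v j : MvPolynomial σ k) =
        homogeneousComponent (e j + m) ((a : MvPolynomial σ k) * (v j : MvPolynomial σ k))
      rw [mul_comm (a : MvPolynomial σ k), mul_comm,
        homogeneousComponent_add_mul_of_isHomogeneous_left (hv j)]
    calc ((conductorDual V (p.coord l) ⟨_, hc _ a.2 m⟩ (v j) : R) : MvPolynomial σ k)
      _ = p.repr x' l := congrArg Subtype.val (conductorDual_apply _ _ _)
      _ = 0 := by
        rw [coe_repr_of_eq_homogeneousComponent hR Subtype.val_injective p hp hx l, hone]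
        split_ifs with hle hij
        · subst hij
          have := hl j
          rw [OneMemClass.coe_one, homogeneousComponent_of_mem (isHomogeneous_one σ k)]
          exact if_neg (by omega)
        · exact map_zero _
        · rfl
  exact Subtype.ext_iff.mp ((injective_iff_map_eq_zero _).mp hbij.1 _ hzero)

variable {k : Type*} [Field k] {D : ℕ} {f : Fin 2 → MvPolynomial (Fin 2) k}
  {y : MvPolynomial (Fin 2) k}

namespace IsParameterSystem

theorem restrictScalars_adjoin_singleton (f : Fin 2 → MvPolynomial (Fin 2) k)
    (y : MvPolynomial (Fin 2) k) :
    (Algebra.adjoin (paramRing f) {y}).restrictScalars k =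
      Algebra.adjoin k (Set.range f ∪ {y}) :=
  (Algebra.adjoin_union_eq_adjoin_adjoin k _ _).symm

theorem restrictScalars_relConductor {d : ℕ} (hf : IsParameterSystem d f) :
    (relConductor (Algebra.adjoin (paramRing f) {y}) (veroneseOver d f)).restrictScalars k =
      relConductor (Algebra.adjoin k (Set.range f ∪ {y})) (veronese k d) := by
  ext x
  simp only [Submodule.restrictScalars_mem, mem_relConductor, hf.mem_veroneseOver,
    ← restrictScalars_adjoin_singleton, Subalgebra.mem_restrictScalars]

theorem isGraded_adjoin_singleton {d : ℕ} (hf : IsParameterSystem d f) (hy : y.IsHomogeneous d) :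
    IsGraded (Subalgebra.toSubmodule (Algebra.adjoin k (Set.range f ∪ {y}))) := by
  refine isGraded_adjoin hf.pos.ne' ?_
  rintro _ (⟨i, rfl⟩ | rfl)
  exacts [hf.isHomogeneous i, hy]

theorem exists_basis_relConductor (hf : IsParameterSystem (D + 1) f)
    (hy : y.IsHomogeneous (D + 1)) {r : paramRing f} (hr : r ≠ 0)
    (hrV : ∀ v ∈ veroneseOver (D + 1) f, r • v ∈ Algebra.adjoin (paramRing f) {y})
    (hD : 0 < D) :
    ∃ b : Module.Basis (Fin (D + 1)) (paramRing f)
        (relConductor (Algebra.adjoin (paramRing f) {y}) (veroneseOver (D + 1) f)),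
      ∀ i, (b i : MvPolynomial (Fin 2) k).IsHomogeneous
        ((D + 1) * (D - (Fin.cons 0 (fun _ ↦ 1) : Fin (D + 1) → ℕ) i)) := by
  obtain ⟨v, hv⟩ := hf.exists_basis_veroneseOver
  obtain ⟨p, hp⟩ := hf.exists_powerBasis_adjoin_singleton hy hr hrV
  have hSV := adjoin_le_veroneseOver _ f hy
  have hbij := bijective_mulDual_of_powerBasis (S := Algebra.adjoin (paramRing f) {y})
    (y := ⟨y, Algebra.self_mem_adjoin_singleton _ y⟩) p hp
  have hc := isGraded_relConductor (hf.isGraded_adjoin_singleton hy)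
    (isGraded_veronese (k := k) hf.pos.ne')
  rw [← hf.restrictScalars_relConductor] at hc
  have hp' (j) : (p j : MvPolynomial (Fin 2) k).IsHomogeneous ((D + 1) * j) := by
    rw [hp j]
    exact hy.pow j
  have hle (i) : (Fin.cons 0 (fun _ ↦ 1) : Fin (D + 1) → ℕ) i ≤ D :=
    Fin.cases (Nat.zero_le D) (fun _ ↦ hD) i
  simp only [Nat.mul_sub]
  exact exists_basis_relConductor_of_bijective hf.isGraded_paramRing hc p hp' v hv (Fin.last D)
    (fun i ↦ Nat.mul_le_mul_left _ (hle i)) ⟨injective_conductorDual hSV hbij.1,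
      surjective_conductorDual hSV hbij (smul_right_injective _ hr) hrV⟩

theorem hilbertFunction_relConductor (hf : IsParameterSystem (D + 1) f)
    (hy : y.IsHomogeneous (D + 1)) {r : paramRing f} (hr : r ≠ 0)
    (hrV : ∀ v ∈ veroneseOver (D + 1) f, r • v ∈ Algebra.adjoin (paramRing f) {y})
    (hD : 0 < D) (n : ℕ) :
    hilbertFunction (relConductor (Algebra.adjoin k (Set.range f ∪ {y})) (veronese k (D + 1)))
      ((D + 1) * n) = (n + 1 - D) + D * (n + 2 - D) := by
  obtain ⟨b, hb⟩ := hf.exists_basis_relConductor hy hr hrV hD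
  rw [← hf.restrictScalars_relConductor, hf.hilbertFunction_restrictScalars b hb,
    Fin.sum_univ_succ]
  simp only [Fin.cons_zero, Fin.cons_succ, Finset.sum_const, Finset.card_fin, smul_eq_mul]
  rw [Nat.sub_zero, show n + 1 - (D - 1) = n + 2 - D by omega]

theorem hilbertFunction_adjoin_singleton (hf : IsParameterSystem (D + 1) f)
    (hy : y.IsHomogeneous (D + 1)) {r : paramRing f} (hr : r ≠ 0)
    (hrV : ∀ v ∈ veroneseOver (D + 1) f, r • v ∈ Algebra.adjoin (paramRing f) {y}) (n : ℕ) :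
    hilbertFunction (Subalgebra.toSubmodule (Algebra.adjoin k (Set.range f ∪ {y})))
      ((D + 1) * n) = ∑ i : Fin (D + 1), (n + 1 - i) := by
  obtain ⟨p, hp⟩ := hf.exists_powerBasis_adjoin_singleton hy hr hrV
  rw [← restrictScalars_adjoin_singleton, Subalgebra.restrictScalars_toSubmodule]
  refine hf.hilbertFunction_restrictScalars p (fun j ↦ ?_) n
  rw [hp j]
  exact hy.pow j

end IsParameterSystem

end HilbertFunctionOfConductor

section ExtensionOfScalars

variable {σ k : Type*} [Field k] {K : Type*} [Field K] [Algebra k K]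

/-- The map on polynomials applying a functional `φ : K → k` to every coefficient. -/
noncomputable def applyToCoeffs (φ : Module.Dual k K) :
    MvPolynomial σ K →ₗ[k] MvPolynomial σ k where
  toFun := AddMonoidAlgebra.map φ.toAddMonoidHom
  map_add' _ _ := AddMonoidAlgebra.map_add _ _ _
  map_smul' c f := by
    ext m
    exact φ.map_smul c (coeff m f)

theorem coeff_applyToCoeffs (φ : Module.Dual k K) (m : σ →₀ ℕ) (f : MvPolynomial σ K) :
    coeff m (applyToCoeffs φ f) = φ (coeff m f) :=
  rfl

theorem eq_zero_of_forall_applyToCoeffs_eq_zero {f : MvPolynomial σ K}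
    (h : ∀ φ : Module.Dual k K, applyToCoeffs φ f = 0) : f = 0 := by
  ext m
  rw [coeff_zero, ← Module.forall_dual_apply_eq_zero_iff k]
  intro φ
  rw [← coeff_applyToCoeffs, h, coeff_zero]

theorem applyToCoeffs_mul_map (φ : Module.Dual k K) (f : MvPolynomial σ K)
    (v : MvPolynomial σ k) :
    applyToCoeffs φ (f * map (algebraMap k K) v) = applyToCoeffs φ f * v := by
  classical
  ext m
  simp only [coeff_applyToCoeffs, coeff_mul, coeff_map, map_sum]
  refine Finset.sum_congr rfl fun x _ ↦ ?_
  rw [mul_comm, ← Algebra.smul_def, map_smul, smul_eq_mul, mul_comm]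

theorem applyToCoeffs_smul_map (φ : Module.Dual k K) (c : K) (v : MvPolynomial σ k) :
    applyToCoeffs φ (c • map (algebraMap k K) v) = φ c • v := by
  ext m
  rw [coeff_applyToCoeffs, coeff_smul, coeff_map, coeff_smul, smul_eq_mul, mul_comm,
    ← Algebra.smul_def, map_smul, smul_eq_mul, smul_eq_mul, mul_comm]

theorem homogeneousComponent_applyToCoeffs (φ : Module.Dual k K) (n : ℕ) (f : MvPolynomial σ K) :
    homogeneousComponent n (applyToCoeffs φ f) = applyToCoeffs φ (homogeneousComponent n f) := by
  ext m
  simp only [coeff_applyToCoeffs, coeff_homogeneousComponent, apply_ite φ, map_zero]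

theorem isHomogeneous_applyToCoeffs (φ : Module.Dual k K) {n : ℕ} {f : MvPolynomial σ K}
    (hf : f.IsHomogeneous n) : (applyToCoeffs φ f).IsHomogeneous n := fun m hm ↦
  hf fun h ↦ hm (by rw [coeff_applyToCoeffs, h, map_zero])

theorem mem_span_map_applyToCoeffs (f : MvPolynomial σ K) :
    f ∈ Submodule.span K
      (Set.range fun φ : Module.Dual k K ↦ map (algebraMap k K) (applyToCoeffs φ f)) := by
  classical
  let b := Module.Basis.ofVectorSpace k K
  let s := f.support.biUnion fun m ↦ (b.repr (coeff m f)).support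
  have hf : f = ∑ i ∈ s, b i • map (algebraMap k K) (applyToCoeffs (b.coord i) f) := by
    ext m
    have hs : (b.repr (coeff m f)).support ⊆ s := by
      by_cases hm : coeff m f = 0
      · simp only [hm, map_zero, Finsupp.support_zero, Finset.empty_subset]
      · exact Finset.subset_biUnion_of_mem (fun m ↦ (b.repr (coeff m f)).support)
          (mem_support_iff.mpr hm)
    conv_lhs => rw [← b.linearCombination_repr (coeff m f),
      Finsupp.linearCombination_apply_of_mem_supported k hs]
    simp only [coeff_sum, coeff_smul, coeff_map, coeff_applyToCoeffs, Module.Basis.coord_apply]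
    exact Finset.sum_congr rfl fun i _ ↦ by rw [Algebra.smul_def, smul_eq_mul, mul_comm]
  rw [hf]
  exact Submodule.sum_mem _ fun i _ ↦
    Submodule.smul_mem _ _ (Submodule.subset_span ⟨b.coord i, by rw [← hf]⟩)

variable (K) in
/-- The extension `K ⊗ N` of a subspace `N` of `k[σ]`, as a subspace of `K[σ]`. -/
noncomputable def extendScalars (N : Submodule k (MvPolynomial σ k)) :
    Submodule K (MvPolynomial σ K) :=
  Submodule.span K (map (algebraMap k K) '' N)

theorem map_mem_extendScalars {N : Submodule k (MvPolynomial σ k)} {v : MvPolynomial σ k}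
    (hv : v ∈ N) : map (algebraMap k K) v ∈ extendScalars K N :=
  Submodule.subset_span ⟨v, hv, rfl⟩

theorem mem_extendScalars {N : Submodule k (MvPolynomial σ k)} {f : MvPolynomial σ K} :
    f ∈ extendScalars K N ↔ ∀ φ : Module.Dual k K, applyToCoeffs φ f ∈ N := by
  refine ⟨fun hf φ ↦ ?_, fun h ↦ ?_⟩
  · induction hf using Submodule.closure_induction with
    | zero => rw [map_zero]; exact N.zero_mem
    | add f g _ _ hf hg => rw [map_add]; exact N.add_mem hf hg
    | smul_mem c f hf =>
      obtain ⟨v, hv, rfl⟩ := hf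
      rw [applyToCoeffs_smul_map]
      exact N.smul_mem _ hv
  · refine Submodule.span_le.mpr ?_ (mem_span_map_applyToCoeffs (k := k) f)
    rintro _ ⟨φ, rfl⟩
    exact map_mem_extendScalars (h φ)

theorem finrank_extendScalars (N : Submodule k (MvPolynomial σ k)) [Module.Finite k N] :
    Module.finrank K (extendScalars K N) = Module.finrank k N := by
  let b := Module.finBasis k N
  let u := fun i ↦ map (algebraMap k K) (b i : MvPolynomial σ k)
  have hu : LinearIndependent K u := by
    refine Fintype.linearIndependent_iff.mpr fun c hc i ↦ ?_
    refine (Module.forall_dual_apply_eq_zero_iff k (c i)).mp fun φ ↦ ?_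
    refine Fintype.linearIndependent_iff.mp (linearIndependent_coe_basis b) (fun i ↦ φ (c i)) ?_ i
    simpa only [u, map_sum, applyToCoeffs_smul_map, map_zero] using congrArg (applyToCoeffs φ) hc
  have hspan : extendScalars K N = Submodule.span K (Set.range u) := by
    refine le_antisymm (Submodule.span_le.mpr ?_) (Submodule.span_le.mpr ?_)
    · rintro _ ⟨v, hv, rfl⟩
      rw [SetLike.mem_coe, ← span_range_coe_basis b] at hv
      obtain ⟨c, rfl⟩ := (Submodule.mem_span_range_iff_exists_fun k).mp hv
      rw [SetLike.mem_coe, map_sum]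
      refine Submodule.sum_mem _ fun i _ ↦ ?_
      rw [smul_eq_C_mul, map_mul, map_C, ← smul_eq_C_mul]
      exact Submodule.smul_mem _ _ (Submodule.subset_span ⟨i, rfl⟩)
    · rintro _ ⟨i, rfl⟩
      exact map_mem_extendScalars (b i).2
  rw [hspan, finrank_span_eq_card hu, Fintype.card_fin]

theorem extendScalars_inf_homogeneousSubmodule (N : Submodule k (MvPolynomial σ k)) (n : ℕ) :
    extendScalars K N ⊓ homogeneousSubmodule σ K n =
      extendScalars K (N ⊓ homogeneousSubmodule σ k n) := by
  ext f
  simp only [Submodule.mem_inf, mem_extendScalars, forall_and, mem_homogeneousSubmodule]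
  refine and_congr_right fun _ ↦ ⟨fun hf φ ↦ isHomogeneous_applyToCoeffs φ hf, fun h m hm ↦ ?_⟩
  obtain ⟨φ, hφ⟩ := not_forall.mp (mt (Module.forall_dual_apply_eq_zero_iff k _).mp hm)
  exact h φ (show coeff m (applyToCoeffs φ f) ≠ 0 from hφ)

theorem hilbertFunction_extendScalars [Finite σ] (N : Submodule k (MvPolynomial σ k)) (n : ℕ) :
    hilbertFunction (extendScalars K N) n = hilbertFunction N n := by
  rw [hilbertFunction, extendScalars_inf_homogeneousSubmodule, finrank_extendScalars,
    hilbertFunction]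

variable (K) in
theorem extendScalars_adjoin (S : Set (MvPolynomial σ k)) :
    extendScalars K (Subalgebra.toSubmodule (Algebra.adjoin k S)) =
      Subalgebra.toSubmodule (Algebra.adjoin K (map (algebraMap k K) '' S)) := by
  refine le_antisymm (Submodule.span_le.mpr ?_) ?_
  · have h : Algebra.adjoin k S ≤ (((Algebra.adjoin K (map (algebraMap k K) '' S)).restrictScalars
        k).comap (mapAlgHom (Algebra.ofId k K))) :=
      Algebra.adjoin_le fun s hs ↦ Algebra.subset_adjoin ⟨s, hs, rfl⟩
    rintro _ ⟨v, hv, rfl⟩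
    exact h hv
  · rw [Algebra.adjoin_eq_span, Submodule.span_le, ← MonoidHom.coe_coe (map (algebraMap k K)),
      ← MonoidHom.map_mclosure]
    rintro _ ⟨v, hv, rfl⟩
    refine map_mem_extendScalars (N := Subalgebra.toSubmodule (Algebra.adjoin k S)) ?_
    rw [Algebra.adjoin_eq_span]
    exact Submodule.subset_span hv

theorem extendScalars_relConductor {S V : Subalgebra k (MvPolynomial σ k)}
    {S' V' : Subalgebra K (MvPolynomial σ K)}
    (hS : Subalgebra.toSubmodule S' = extendScalars K (Subalgebra.toSubmodule S))
    (hV : Subalgebra.toSubmodule V' = extendScalars K (Subalgebra.toSubmodule V)) :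
    extendScalars K (relConductor S V) = relConductor S' V' := by
  have mem_S' (f) : f ∈ S' ↔ ∀ φ : Module.Dual k K, applyToCoeffs φ f ∈ S := by
    rw [← Subalgebra.mem_toSubmodule, hS, mem_extendScalars]
    rfl
  have mem_relConductor' (f) : f ∈ relConductor S' V' ↔
      ∀ v ∈ V, f * map (algebraMap k K) v ∈ S' := by
    refine mem_relConductor.trans ⟨fun h v hv ↦ h _ ?_, fun h v hv ↦ ?_⟩
    · rw [← Subalgebra.mem_toSubmodule, hV]
      exact map_mem_extendScalars hv
    · suffices V'.toSubmodule ≤ S'.toSubmodule.comap (LinearMap.mulLeft K f) from this hv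
      rw [hV, extendScalars, Submodule.span_le]
      rintro _ ⟨v, hv, rfl⟩
      exact h v hv
  ext f
  simp only [mem_relConductor', mem_S', mem_extendScalars, mem_relConductor,
    applyToCoeffs_mul_map]
  exact ⟨fun h v hv φ ↦ h φ v hv, fun h φ v hv ↦ h v hv φ⟩

variable (k K) in
theorem extendScalars_veronese (d : ℕ) :
    extendScalars K (Subalgebra.toSubmodule (veronese k d)) =
      Subalgebra.toSubmodule (veronese K d) := by
  ext f
  simp only [mem_extendScalars, Subalgebra.mem_toSubmodule, mem_veronese_iff,
    homogeneousComponent_applyToCoeffs]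
  refine ⟨fun h n hn ↦ eq_zero_of_forall_applyToCoeffs_eq_zero fun φ ↦ h φ n hn,
    fun h φ n hn ↦ ?_⟩
  rw [h n hn, map_zero]

end ExtensionOfScalars

section CommonDenominators

variable {R B : Type*} [CommRing R] [CommRing B] [Algebra R B]

theorem exists_ne_zero_forall_mul_mem [IsDomain B] (A : Subalgebra R B) {N : Submodule R B}
    (hN : N.FG) (h : ∀ v ∈ N, ∃ a ∈ A, a ≠ 0 ∧ a * v ∈ A) :
    ∃ a ∈ A, a ≠ 0 ∧ ∀ v ∈ N, a * v ∈ A := by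
  induction N, hN using Submodule.fg_induction with
  | singleton x =>
    obtain ⟨a, ha, ha0, hax⟩ := h x (Submodule.mem_span_singleton_self x)
    refine ⟨a, ha, ha0, fun v hv ↦ ?_⟩
    obtain ⟨c, rfl⟩ := Submodule.mem_span_singleton.mp hv
    rw [mul_smul_comm]
    exact A.smul_mem hax c
  | sup N₁ N₂ _ _ ih₁ ih₂ =>
    obtain ⟨a₁, ha₁, ha₁0, h₁⟩ := ih₁ fun v hv ↦ h v (Submodule.mem_sup_left hv)
    obtain ⟨a₂, ha₂, ha₂0, h₂⟩ := ih₂ fun v hv ↦ h v (Submodule.mem_sup_right hv)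
    refine ⟨a₁ * a₂, A.mul_mem ha₁ ha₂, mul_ne_zero ha₁0 ha₂0, fun v hv ↦ ?_⟩
    obtain ⟨v₁, hv₁, v₂, hv₂, rfl⟩ := Submodule.mem_sup.mp hv
    have := A.add_mem (A.mul_mem ha₂ (h₁ v₁ hv₁)) (A.mul_mem ha₁ (h₂ v₂ hv₂))
    convert this using 1
    ring

theorem exists_ne_zero_forall_smul_mem [IsDomain B] {A V : Subalgebra R B} [Module.Finite R V]
    (hAV : A ≤ V) (h : ∀ v ∈ V, ∃ a ∈ A, a ≠ 0 ∧ a * v ∈ A) :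
    ∃ r : R, r ≠ 0 ∧ ∀ v ∈ V, r • v ∈ A := by
  have : Nontrivial R := (algebraMap R B).domain_nontrivial
  obtain ⟨a, ha, ha0, haV⟩ := exists_ne_zero_forall_mul_mem A
    (N := Subalgebra.toSubmodule V) (Module.Finite.iff_fg.mp ‹_›) h
  have hint : IsIntegral R (⟨a, ha⟩ : A) :=
    (isIntegral_algHom_iff (Subalgebra.inclusion hAV) (Subalgebra.inclusion_injective hAV)).mp
      (Algebra.IsIntegral.isIntegral _)
  obtain ⟨r, hr, hr0⟩ := Submodule.exists_mem_ne_zero_of_ne_bot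
    (Ideal.comap_ne_bot_of_integral_mem (fun h ↦ ha0 (Subtype.ext_iff.mp h))
      (Ideal.mem_span_singleton_self _) hint)
  obtain ⟨c, hc⟩ := Ideal.mem_span_singleton.mp (Ideal.mem_comap.mp hr)
  refine ⟨r, hr0, fun v hv ↦ ?_⟩
  have hrv : r • v = c * (a * v) := by
    rw [Algebra.smul_def, mul_left_comm, ← mul_assoc]
    exact congrArg (· * v) (Subtype.ext_iff.mp hc)
  rw [hrv]
  exact A.mul_mem c.2 (haV v hv)

theorem exists_pow_mul_mem_of_mem_adjoin {A : Subalgebra R B} {T : Set B} {a : B} (ha : a ∈ A)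
    (hT : ∀ t ∈ T, a * t ∈ A) {v : B} (hv : v ∈ Algebra.adjoin R T) : ∃ n : ℕ, a ^ n * v ∈ A := by
  induction hv using Algebra.adjoin_induction with
  | mem t ht => exact ⟨1, by rw [pow_one]; exact hT t ht⟩
  | algebraMap r => exact ⟨0, by rw [pow_zero, one_mul]; exact A.algebraMap_mem r⟩
  | add v w _ _ hv hw =>
    obtain ⟨m, hm⟩ := hv
    obtain ⟨n, hn⟩ := hw
    refine ⟨m + n, ?_⟩
    have := A.add_mem (A.mul_mem (A.pow_mem ha n) hm) (A.mul_mem (A.pow_mem ha m) hn)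
    convert this using 1
    ring
  | mul v w _ _ hv hw =>
    obtain ⟨m, hm⟩ := hv
    obtain ⟨n, hn⟩ := hw
    refine ⟨m + n, ?_⟩
    rw [pow_add, mul_mul_mul_comm]
    exact A.mul_mem hm hn

end CommonDenominators

section ChoiceOfParameters

theorem exists_mem_isRelPrime {k B : Type*} [Field k] [Infinite k] [CommRing B] [IsDomain B]
    [UniqueFactorizationMonoid B] [Algebra k B] {N : Submodule k B} {f : B} (hf : f ≠ 0)
    (h : ∀ p, Prime p → ∃ v ∈ N, ¬p ∣ v) : ∃ v ∈ N, IsRelPrime f v := by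
  classical
  let multiples (p : (UniqueFactorizationMonoid.factors f).toFinset) : Submodule k N :=
    ((Ideal.span {p.1}).restrictScalars k).comap N.subtype
  have hproper (p) : multiples p ≠ ⊤ := by
    intro htop
    obtain ⟨v, hv, hpv⟩ := h p (UniqueFactorizationMonoid.prime_of_factor _
      (Multiset.mem_toFinset.mp p.2))
    exact hpv (Ideal.mem_span_singleton.mp
      (show ⟨v, hv⟩ ∈ multiples p from htop ▸ Submodule.mem_top))
  obtain ⟨v, hv⟩ : ∃ v, ∀ p, v ∉ multiples p := by
    by_contra! hcover
    obtain ⟨p, hp⟩ := Subspace.exists_eq_top_of_iUnion_eq_univ (p := multiples)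
      (Set.eq_univ_of_forall fun v ↦ Set.mem_iUnion.mpr (hcover v))
    exact hproper p hp
  refine ⟨v, v.2, WfDvdMonoid.isRelPrime_of_no_irreducible_factors (fun h ↦ hf h.1) ?_⟩
  intro z hz hzf hzv
  obtain ⟨p, hp, hzp⟩ := UniqueFactorizationMonoid.exists_mem_factors_of_dvd hf hz hzf
  exact hv ⟨p, Multiset.mem_toFinset.mpr hp⟩
    (Ideal.mem_span_singleton.mpr (hzp.symm.dvd.trans hzv))

theorem exists_sup_span_singleton_eq {K W : Type*} [DivisionRing K] [AddCommGroup W] [Module K W]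
    {F H : Submodule K W} [Module.Finite K H] (hFH : F ≤ H)
    (h : Module.finrank K H ≤ Module.finrank K F + 1) :
    ∃ y ∈ H, F ⊔ Submodule.span K {y} = H := by
  obtain heq | hlt := hFH.eq_or_lt
  · exact ⟨0, H.zero_mem, by rw [Submodule.span_zero_singleton, sup_bot_eq, heq]⟩
  · obtain ⟨u, hu, hsup⟩ := exists_sup_span_range_eq hFH
      (h.antisymm (Submodule.finrank_lt_finrank_of_lt hlt))
    exact ⟨u 0, hu 0, by rwa [Set.range_unique, Fin.default_eq_zero] at hsup⟩

variable {k : Type*} [Field k] {d : ℕ} {g : Fin 3 → MvPolynomial (Fin 2) k}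

theorem exists_isParameterSystem_adjoin_eq [Infinite k] (hd : 0 < d)
    (hg : ∀ i, (g i).IsHomogeneous d) (hp : ∀ p, Prime p → ∃ i, ¬p ∣ g i) :
    ∃ (f : Fin 2 → MvPolynomial (Fin 2) k) (y : MvPolynomial (Fin 2) k),
      IsParameterSystem d f ∧ y.IsHomogeneous d ∧
        coneRing g = Algebra.adjoin k (Set.range f ∪ {y}) := by
  let N := Submodule.span k (Set.range g)
  have hmem (i) : g i ∈ N := Submodule.subset_span ⟨i, rfl⟩
  have hN : N ≤ homogeneousSubmodule (Fin 2) k d := Submodule.span_le.mpr (by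
    rintro _ ⟨i, rfl⟩
    exact hg i)
  have : Module.Finite k N := Module.Finite.span_of_finite k (Set.finite_range g)
  obtain ⟨i, hi⟩ := hp _ (X_prime (R := k) (i := (0 : Fin 2)))
  have hgi : g i ≠ 0 := fun h ↦ hi (h ▸ dvd_zero _)
  obtain ⟨w, hw, hrel⟩ := exists_mem_isRelPrime (N := N) hgi fun p hprime ↦
    (hp p hprime).imp' g fun i hi ↦ ⟨hmem i, hi⟩
  have hf : IsParameterSystem d ![g i, w] := ⟨hd, Fin.forall_fin_two.mpr ⟨hg i, hN hw⟩, hrel⟩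
  have hle : Submodule.span k (Set.range ![g i, w]) ≤ N := by
    rw [Submodule.span_le, Matrix.range_cons, Matrix.range_cons, Matrix.range_empty]
    simp only [Set.union_empty, Set.union_subset_iff, Set.singleton_subset_iff]
    exact ⟨hmem i, hw⟩
  obtain ⟨y, hy, hsup⟩ := exists_sup_span_singleton_eq hle (by
    rw [finrank_span_eq_card hf.linearIndependent]
    exact finrank_range_le_card g)
  refine ⟨_, y, hf, hN hy, ?_⟩
  rw [coneRing, ← Algebra.adjoin_span, ← Algebra.adjoin_span (R := k) (s := _ ∪ {y}),
    Submodule.span_union, hsup]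

theorem IsParameterSystem.exists_smul_mem_adjoin {D : ℕ} {f : Fin 2 → MvPolynomial (Fin 2) k}
    (hf : IsParameterSystem (D + 1) f) {y a : MvPolynomial (Fin 2) k}
    (hy : y.IsHomogeneous (D + 1)) (ha : a ∈ Algebra.adjoin k (Set.range f ∪ {y})) (ha0 : a ≠ 0)
    (haV : ∀ v : MvPolynomial (Fin 2) k, v.IsHomogeneous (D + 1) →
      a * v ∈ Algebra.adjoin k (Set.range f ∪ {y})) :
    ∃ r : paramRing f, r ≠ 0 ∧
      ∀ v ∈ veroneseOver (D + 1) f, r • v ∈ Algebra.adjoin (paramRing f) {y} := by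
  simp only [← restrictScalars_adjoin_singleton, Subalgebra.mem_restrictScalars] at ha haV
  obtain ⟨b, -⟩ := hf.exists_basis_veroneseOver
  have := Module.Finite.of_basis b
  refine exists_ne_zero_forall_smul_mem (adjoin_le_veroneseOver _ f hy) fun v hv ↦ ?_
  obtain ⟨n, hn⟩ := exists_pow_mul_mem_of_mem_adjoin ha haV hv
  exact ⟨a ^ n, pow_mem ha n, pow_ne_zero n ha0, hn⟩

end ChoiceOfParameters

section HilbertFunctionOfConeRing

variable {k : Type*} [Field k] {D : ℕ} {g : Fin 3 → MvPolynomial (Fin 2) k}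

theorem exists_not_dvd_map (K : Type*) [Field K] [Algebra k K] {ι : Type*}
    {g : ι → MvPolynomial (Fin 2) k} {d : ℕ} (hg : ∀ i, (g i).IsHomogeneous d)
    (hp : ∀ p, Prime p → ∃ i, ¬p ∣ g i) {p : MvPolynomial (Fin 2) K} (hprime : Prime p) :
    ∃ i, ¬p ∣ map (algebraMap k K) (g i) := by
  by_contra! hdvd
  obtain ⟨N, hN⟩ := exists_idealOfVars_pow_le_span (S := Set.range g)
    (by rintro _ ⟨i, rfl⟩; exact ⟨d, hg i⟩) (fun p hp' ↦ by simpa using hp p hp')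
  have hspan : (Ideal.span (Set.range g)).map (map (algebraMap k K)) ≤ Ideal.span {p} := by
    rw [Ideal.map_span, Ideal.span_le]
    rintro _ ⟨_, ⟨i, rfl⟩, rfl⟩
    exact Ideal.mem_span_singleton.mpr (hdvd i)
  have dvd_X (i : Fin 2) : p ∣ X i := by
    refine hprime.dvd_of_dvd_pow (n := N) (Ideal.mem_span_singleton.mp (hspan ?_))
    rw [← map_X (algebraMap k K), ← map_pow]
    have hX : X i ∈ idealOfVars (Fin 2) k := Ideal.subset_span ⟨i, rfl⟩
    exact Ideal.mem_map_of_mem _ (hN (Ideal.pow_mem_pow hX N))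
  exact hprime.not_isUnit (isRelPrime_X_zero_X_one (dvd_X 0) (dvd_X 1))

theorem exists_isParameterSystem_extendScalars_eq (K : Type*) [Field K] [Infinite K] [Algebra k K]
    (hg : ∀ i, (g i).IsHomogeneous (D + 1)) (hp : ∀ p, Prime p → ∃ i, ¬p ∣ g i)
    (hbir : ∀ v ∈ veronese k (D + 1), ∃ a ∈ coneRing g, a ≠ 0 ∧ a * v ∈ coneRing g) :
    ∃ (f : Fin 2 → MvPolynomial (Fin 2) K) (y : MvPolynomial (Fin 2) K) (r : paramRing f),
      IsParameterSystem (D + 1) f ∧ y.IsHomogeneous (D + 1) ∧ r ≠ 0 ∧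
      (∀ v ∈ veroneseOver (D + 1) f, r • v ∈ Algebra.adjoin (paramRing f) {y}) ∧
      extendScalars K (Subalgebra.toSubmodule (coneRing g)) =
        Subalgebra.toSubmodule (Algebra.adjoin K (Set.range f ∪ {y})) := by
  obtain ⟨f, y, hf, hy, hfy⟩ := exists_isParameterSystem_adjoin_eq D.succ_pos
    (fun i ↦ (hg i).map (algebraMap k K)) fun p ↦ exists_not_dvd_map K hg hp
  have hA : extendScalars K (Subalgebra.toSubmodule (coneRing g)) =
      Subalgebra.toSubmodule (Algebra.adjoin K (Set.range f ∪ {y})) := by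
    rw [← hfy, coneRing, extendScalars_adjoin, ← Set.range_comp]
    rfl
  obtain ⟨a, ha, ha0, haV⟩ := exists_ne_zero_forall_mul_mem (coneRing g)
    (N := homogeneousSubmodule (Fin 2) k (D + 1)) (Module.Finite.iff_fg.mp inferInstance)
    fun v hv ↦ hbir v (Algebra.subset_adjoin hv)
  obtain ⟨r, hr, hrV⟩ := hf.exists_smul_mem_adjoin hy
    (a := map (algebraMap k K) a) (by
      rw [← Subalgebra.mem_toSubmodule, ← hA]
      exact map_mem_extendScalars ha)
    ((map_ne_zero_iff _ (map_injective _ (algebraMap k K).injective)).mpr ha0) fun v hv ↦ by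
      rw [← Subalgebra.mem_toSubmodule, ← hA, mul_comm, mem_extendScalars]
      intro φ
      rw [applyToCoeffs_mul_map, mul_comm]
      exact haV _ (isHomogeneous_applyToCoeffs φ hv)
  exact ⟨f, y, r, hf, hy, hr, hrV, hA⟩

variable (hg : ∀ i, (g i).IsHomogeneous (D + 1)) (hp : ∀ p, Prime p → ∃ i, ¬p ∣ g i)
  (hbir : ∀ v ∈ veronese k (D + 1), ∃ a ∈ coneRing g, a ≠ 0 ∧ a * v ∈ coneRing g)

include hg hp hbir

theorem hilbertFunction_coneRing (n : ℕ) :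
    hilbertFunction (Subalgebra.toSubmodule (coneRing g)) ((D + 1) * n) =
      ∑ i : Fin (D + 1), (n + 1 - i) := by
  obtain ⟨f, y, r, hf, hy, hr, hrV, hA⟩ :=
    exists_isParameterSystem_extendScalars_eq (AlgebraicClosure k) hg hp hbir
  rw [← hilbertFunction_extendScalars (K := AlgebraicClosure k), hA,
    hf.hilbertFunction_adjoin_singleton hy hr hrV]

theorem hilbertFunction_relConductor_coneRing (hD : 0 < D) (n : ℕ) :
    hilbertFunction (relConductor (coneRing g) (veronese k (D + 1))) ((D + 1) * n) =
      (n + 1 - D) + D * (n + 2 - D) := by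
  obtain ⟨f, y, r, hf, hy, hr, hrV, hA⟩ :=
    exists_isParameterSystem_extendScalars_eq (AlgebraicClosure k) hg hp hbir
  rw [← hilbertFunction_extendScalars (K := AlgebraicClosure k),
    extendScalars_relConductor hA.symm (extendScalars_veronese k _ _).symm,
    hf.hilbertFunction_relConductor hy hr hrV hD]

end HilbertFunctionOfConeRing

section CommonDivisors

theorem exists_forall_dvd_and_forall_prime_not_mul_dvd {α : Type*} [CommMonoidWithZero α]
    [IsCancelMulZero α] [WfDvdMonoid α] {S : Set α} {a : α} (ha : a ∈ S) (ha0 : a ≠ 0) :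
    ∃ h, (∀ v ∈ S, h ∣ v) ∧ ∀ p, Prime p → ∃ v ∈ S, ¬h * p ∣ v := by
  let T : Set α := {w | ∃ h, h * w = a ∧ ∀ v ∈ S, h ∣ v}
  have hT : T.Nonempty := ⟨a, 1, one_mul a, fun v _ ↦ one_dvd v⟩
  obtain ⟨w, ⟨h, rfl, hdvd⟩, hmin⟩ := wellFounded_dvdNotUnit.has_min T hT
  refine ⟨h, hdvd, fun p hp ↦ ?_⟩
  by_contra! hhp
  obtain ⟨hh, hw⟩ := mul_ne_zero_iff.mp ha0
  obtain ⟨u, rfl⟩ := (mul_dvd_mul_iff_left hh).mp (hhp _ ha)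
  exact hmin u ⟨h * p, mul_assoc h p u, hhp⟩
    ⟨right_ne_zero_of_mul hw, p, hp.not_isUnit, mul_comm p u⟩

theorem dvd_of_isRelPrime_of_dvd_mul_dvd_mul {α : Type*} [CommMonoidWithZero α] [IsCancelMulZero α]
    [DecompositionMonoid α] {p q h v : α} (hpq : IsRelPrime p q) (hp : p ≠ 0) (h₁ : h ∣ v * p)
    (h₂ : h ∣ v * q) : h ∣ v := by
  obtain ⟨s, hs⟩ := h₁
  obtain ⟨t, ht⟩ := h₂
  obtain rfl | hh := eq_or_ne h 0
  · rw [zero_mul] at hs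
    rw [(mul_eq_zero.mp hs).resolve_right hp]
  have hst : s * q = p * t := mul_left_cancel₀ hh (by
    rw [← mul_assoc, ← hs, mul_left_comm, ← ht, mul_right_comm, mul_comm p])
  obtain ⟨u, rfl⟩ := hpq.dvd_of_dvd_mul_right ⟨t, hst⟩
  exact ⟨u, mul_right_cancel₀ hp (by rw [hs, mul_assoc, mul_comm u])⟩

variable {k : Type*} [Field k]

theorem finrank_map_mulLeft {R : Type*} [Ring R] [NoZeroDivisors R] [Algebra k R] {h : R}
    (hh : h ≠ 0) (N : Submodule k R) :
    Module.finrank k (N.map (LinearMap.mulLeft k h)) = Module.finrank k N :=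
  (Submodule.equivMapOfInjective _ (mul_right_injective₀ hh) N).finrank_eq.symm

theorem exists_eq_map_mulLeft_of_le_homogeneousSubmodule {m : ℕ}
    {C : Submodule k (MvPolynomial (Fin 2) k)} (hC : C ≤ homogeneousSubmodule (Fin 2) k m)
    (hne : C ≠ ⊥) :
    ∃ e r h, e + r = m ∧ h ≠ 0 ∧ h.IsHomogeneous e ∧
      ∃ W ≤ homogeneousSubmodule (Fin 2) k r, C = W.map (LinearMap.mulLeft k h) ∧
        ∃ N, idealOfVars (Fin 2) k ^ N ≤ Ideal.span (W : Set (MvPolynomial (Fin 2) k)) := by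
  obtain ⟨_, ha, ha0⟩ := C.exists_mem_ne_zero_of_ne_bot hne
  obtain ⟨h, hdvd, hmax⟩ := exists_forall_dvd_and_forall_prime_not_mul_dvd ha ha0
  obtain ⟨u, rfl⟩ := hdvd _ ha
  obtain ⟨hh, hu⟩ := mul_ne_zero_iff.mp ha0
  have hhom := isHomogeneous_totalDegree_of_mul (hC ha) ha0
  have hm : h.totalDegree + u.totalDegree = m := by
    rw [← totalDegree_mul_of_isDomain hh hu]
    exact IsHomogeneous.totalDegree (hC ha) ha0
  let W := homogeneousSubmodule (Fin 2) k u.totalDegree ⊓ C.comap (LinearMap.mulLeft k h)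
  have hCW : C = W.map (LinearMap.mulLeft k h) := by
    refine le_antisymm (fun v hv ↦ ?_) (Submodule.map_le_iff_le_comap.mpr inf_le_right)
    obtain ⟨w, hw, rfl⟩ := exists_isHomogeneous_eq_mul_of_dvd hhom (hm ▸ hC hv) (hdvd v hv)
    exact ⟨w, ⟨hw, hv⟩, rfl⟩
  refine ⟨_, _, h, hm, hh, hhom, W, inf_le_left, hCW, exists_idealOfVars_pow_le_span
    (fun w hw ↦ ⟨_, hw.1⟩) fun p hp ↦ ?_⟩
  obtain ⟨v, hv, hndvd⟩ := hmax p hp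
  obtain ⟨w, hw, rfl⟩ := hCW.le hv
  exact ⟨w, hw, fun hpw ↦ hndvd (mul_dvd_mul_left h hpw)⟩

theorem homogeneousSubmodule_le_mul_of_idealOfVars_pow_le {σ : Type*} {r M N : ℕ}
    {W : Submodule k (MvPolynomial σ k)} (hW : W ≤ homogeneousSubmodule σ k r)
    (hN : idealOfVars σ k ^ N ≤ Ideal.span (W : Set (MvPolynomial σ k))) (hM : N ≤ r + M) :
    homogeneousSubmodule σ k (r + M) ≤ W * homogeneousSubmodule σ k M := by
  intro f hf
  have hmem : f ∈ Ideal.span (W : Set (MvPolynomial σ k)) :=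
    hN (Ideal.pow_le_pow_right hM (mem_idealOfVars_pow_of_isHomogeneous hf))
  rw [← (homogeneousComponent_of_mem hf).trans (if_pos rfl)]
  clear hf
  induction hmem using Submodule.closure_induction with
  | zero => rw [map_zero]; exact zero_mem _
  | add x y _ _ hx hy => rw [map_add]; exact add_mem hx hy
  | smul_mem b w hw =>
    rw [smul_eq_mul, mul_comm b, homogeneousComponent_add_mul_of_isHomogeneous_left (hW hw)]
    exact Submodule.mul_mem_mul hw (homogeneousComponent_isHomogeneous _ _)

end CommonDivisors

section GradedVeroneseIdeals

variable {k : Type*} [Field k]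

theorem map_mulLeft_mul_le {R : Type*} [Semiring R] [Algebra k R] {V : Subalgebra k R}
    {c W N : Submodule k R} (hmul : ∀ x ∈ c, ∀ v ∈ V, x * v ∈ c) {h : R}
    (hW : W.map (LinearMap.mulLeft k h) ≤ c) (hN : N ≤ Subalgebra.toSubmodule V) :
    (W * N).map (LinearMap.mulLeft k h) ≤ c := by
  rw [Submodule.map_le_iff_le_comap] at hW ⊢
  refine Submodule.mul_le.mpr fun w hw v hv ↦ ?_
  rw [Submodule.mem_comap, LinearMap.mulLeft_apply, ← mul_assoc]
  exact hmul _ (hW hw) v (hN hv)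

variable {E : ℕ} {c : Submodule k (MvPolynomial (Fin 2) k)}

theorem veronese_inf_span_singleton_le {h : MvPolynomial (Fin 2) k}
    (he : h.IsHomogeneous ((E + 1) * E)) (hhc : ∀ m,
    (homogeneousSubmodule (Fin 2) k (E + (E + 2) * m)).map (LinearMap.mulLeft k h) ≤ c) :
    Subalgebra.toSubmodule (veronese k (E + 2)) ⊓ (Ideal.span {h}).restrictScalars k ≤ c := by
  refine ((isGraded_veronese (by omega)).inf
    (isGraded_span_singleton he)).le_of_forall_inf_homogeneousSubmodule_le ?_
  rintro n v ⟨⟨hvV, hvh⟩, hvn⟩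
  have hvn' : homogeneousComponent n v = v := (homogeneousComponent_of_mem hvn).trans (if_pos rfl)
  obtain rfl | hv0 := eq_or_ne v 0
  · exact zero_mem _
  obtain ⟨m, rfl⟩ : E + 2 ∣ n := by
    by_contra hn
    exact hv0 (hvn'.symm.trans (mem_veronese_iff.mp hvV n hn))
  obtain ⟨w, rfl⟩ := Ideal.mem_span_singleton.mp hvh
  have hen : (E + 1) * E ≤ (E + 2) * m := by
    by_contra hlt
    rw [homogeneousComponent_mul_of_isHomogeneous_left he, if_neg hlt] at hvn'
    exact hv0 hvn'.symm
  have hEm : E ≤ m := by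
    by_contra! hlt
    have := Nat.mul_le_mul_left (E + 2) (show m + 1 ≤ E from hlt)
    nlinarith
  obtain ⟨m, rfl⟩ := Nat.exists_eq_add_of_le hEm
  obtain ⟨w', hw', heq⟩ := exists_isHomogeneous_eq_mul_of_dvd (n := E + (E + 2) * m) he
    (by
    rwa [show (E + 1) * E + (E + (E + 2) * m) = (E + 2) * (E + m) by ring]) ⟨w, rfl⟩
  rw [heq]
  exact hhc m ⟨w', hw', rfl⟩

variable (hmul : ∀ x ∈ c, ∀ v ∈ veronese k (E + 2), x * v ∈ c)
  (hH : ∀ n, hilbertFunction c ((E + 2) * n) = (n - E) + (E + 1) * (n + 1 - E))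

include hmul hH

theorem exists_map_mulLeft_homogeneousSubmodule_le :
    ∃ h : MvPolynomial (Fin 2) k, h ≠ 0 ∧ h.IsHomogeneous ((E + 1) * E) ∧
      (homogeneousSubmodule (Fin 2) k E).map (LinearMap.mulLeft k h) ≤ c := by
  let H := homogeneousSubmodule (Fin 2) k
  have hCrank : Module.finrank k ↥(c ⊓ H ((E + 2) * E)) = E + 1 := (hH E).trans (by simp)
  have hne : c ⊓ H ((E + 2) * E) ≠ ⊥ := fun h0 ↦ by
    rw [h0, finrank_bot] at hCrank
    omega
  obtain ⟨e, r, h, her, hh, he, W, hW, hCW, N, hN⟩ :=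
    exists_eq_map_mulLeft_of_le_homogeneousSubmodule inf_le_right hne
  have hWc : W.map (LinearMap.mulLeft k h) ≤ c := hCW ▸ inf_le_left
  rw [hCW, finrank_map_mulLeft hh] at hCrank
  have hEr : E ≤ r := by
    have := Submodule.finrank_mono hW
    rw [hCrank, finrank_homogeneousSubmodule_fin_two] at this
    omega
  have hrE : r ≤ E := by
    have hsub : (H (r + (E + 2) * (N + 1))).map (LinearMap.mulLeft k h) ≤
        c ⊓ H ((E + 2) * (E + (N + 1))) := by
      refine le_inf ?_ ?_
      · exact (Submodule.map_mono (homogeneousSubmodule_le_mul_of_idealOfVars_pow_le hW hN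
          (by nlinarith))).trans
          (map_mulLeft_mul_le hmul hWc (homogeneousSubmodule_le_veronese k _ _))
      · rintro _ ⟨f, hf, rfl⟩
        exact mul_isHomogeneous_of_add_eq he hf (by linarith)
    have hrank := (Submodule.finrank_mono hsub).trans_eq (hH _)
    rw [finrank_map_mulLeft hh, finrank_homogeneousSubmodule_fin_two,
      show E + (N + 1) - E = N + 1 by omega, show E + (N + 1) + 1 - E = N + 2 by omega] at hrank
    nlinarith
  obtain rfl : r = E := le_antisymm hrE hEr
  have hWtop : W = H r := Submodule.eq_of_le_of_finrank_le hW (by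
    rw [hCrank, finrank_homogeneousSubmodule_fin_two])
  subst hWtop
  obtain rfl : e = (r + 1) * r := by linarith
  exact ⟨h, hh, he, hWc⟩

theorem exists_eq_veronese_inf_span_singleton (hgr : IsGraded c)
    (hc : c ≤ Subalgebra.toSubmodule (veronese k (E + 2))) :
    ∃ h : MvPolynomial (Fin 2) k, h.IsHomogeneous ((E + 1) * E) ∧ h ≠ 0 ∧
      c = Subalgebra.toSubmodule (veronese k (E + 2)) ⊓ (Ideal.span {h}).restrictScalars k := by
  let H := homogeneousSubmodule (Fin 2) k
  obtain ⟨h, hh, he, hhE⟩ := exists_map_mulLeft_homogeneousSubmodule_le hmul hH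
  have hhc (m : ℕ) : (H (E + (E + 2) * m)).map (LinearMap.mulLeft k h) ≤ c :=
    (Submodule.map_mono (homogeneousSubmodule_add E _).le).trans
      (map_mulLeft_mul_le hmul hhE (homogeneousSubmodule_le_veronese k _ m))
  have dvd_of_mem (m : ℕ) {v} (hv : v ∈ c) (hvm : v ∈ H ((E + 2) * (E + (m + 1)))) : h ∣ v := by
    have hle : (H (E + (E + 2) * (m + 1))).map (LinearMap.mulLeft k h) ≤
        c ⊓ H ((E + 2) * (E + (m + 1))) := le_inf (hhc _) (by
      rintro _ ⟨f, hf, rfl⟩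
      exact mul_isHomogeneous_of_add_eq he hf (by ring))
    have heq := Submodule.eq_of_le_of_finrank_le hle ((hH _).trans_le (by
      rw [finrank_map_mulLeft hh, finrank_homogeneousSubmodule_fin_two,
        show E + (m + 1) - E = m + 1 by omega, show E + (m + 1) + 1 - E = m + 2 by omega]
      nlinarith))
    obtain ⟨f, -, rfl⟩ := heq.ge ⟨hv, hvm⟩
    exact dvd_mul_right _ _
  refine ⟨h, he, hh, le_antisymm (le_inf hc ?_) (veronese_inf_span_singleton_le he hhc)⟩
  refine hgr.le_of_forall_inf_homogeneousSubmodule_le ?_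
  rintro n v ⟨hvc, hvn⟩
  by_cases hn : E + 2 ∣ n
  · obtain ⟨m, rfl⟩ := hn
    have dvd_mul_X_pow (i : Fin 2) : h ∣ v * X i ^ ((E + 2) * (E + 1)) := by
      have hX : (X i ^ ((E + 2) * (E + 1)) : MvPolynomial (Fin 2) k).IsHomogeneous _ :=
        isHomogeneous_X_pow i _
      exact dvd_of_mem m (hmul v hvc _ (homogeneousSubmodule_le_veronese k _ _ hX))
        (mul_isHomogeneous_of_add_eq hvn hX (by ring))
    exact Ideal.mem_span_singleton.mpr (dvd_of_isRelPrime_of_dvd_mul_dvd_mul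
      (IsRelPrime.pow isRelPrime_X_zero_X_one) (pow_ne_zero _ (X_ne_zero 0))
      (dvd_mul_X_pow 0) (dvd_mul_X_pow 1))
  · rw [← (homogeneousComponent_of_mem hvn).trans (if_pos rfl), mem_veronese_iff.mp (hc hvc) n hn]
    exact zero_mem _

end GradedVeroneseIdeals

section HilbertSamuelMultiplicity

theorem length_eq_finrank_of_isTorsionBySet {k R N : Type*} [Field k] [CommRing R] [Algebra k R]
    [AddCommGroup N] [Module R N] [Module k N] [IsScalarTower k R N] [Module.Finite k N]
    {J : Ideal R} (hJ : Function.Surjective (algebraMap k (R ⧸ J)))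
    (hN : Module.IsTorsionBySet R N J) : Module.length R N = Module.finrank k N := by
  let := hN.module
  have : IsScalarTower R (R ⧸ J) N := hN.isScalarTower
  have : IsScalarTower k (R ⧸ J) N := hN.isScalarTower
  rw [← Module.length_eq_finrank, Module.length_eq_of_surjective hJ,
    Module.length_eq_of_surjective (S := R) (R := R ⧸ J) Ideal.Quotient.mk_surjective]

variable {k R : Type*} [Field k] [CommRing R] [Algebra k R] {J : Ideal R}

theorem isTorsionBySet_map_mkQ_pow (J : Ideal R) (n : ℕ) :
    Module.IsTorsionBySet R ↥(Submodule.map (J ^ (n + 1)).mkQ (J ^ n)) J := by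
  rintro ⟨_, s, hs, rfl⟩ ⟨r, hr⟩
  refine Subtype.ext ((Submodule.Quotient.mk_eq_zero _).mpr ?_)
  rw [pow_succ']
  exact Ideal.mul_mem_mul hr hs

theorem length_quotient_pow_succ_eq_length_add (J : Ideal R) (n : ℕ) :
    Module.length R (R ⧸ J ^ (n + 1)) =
      Module.length R ↥(Submodule.map (J ^ (n + 1)).mkQ (J ^ n)) + Module.length R (R ⧸ J ^ n) := by
  rw [← (Submodule.quotientQuotientEquivQuotient (J ^ (n + 1)) (J ^ n)
    (Ideal.pow_le_pow_right n.le_succ)).length_eq]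
  exact Module.length_eq_add_of_exact _ _ (Submodule.subtype_injective _)
    (Submodule.mkQ_surjective _) (LinearMap.exact_subtype_mkQ _)

theorem length_map_mkQ_pow (hJ : Function.Surjective (algebraMap k (R ⧸ J))) (n : ℕ)
    {U : Submodule k R} [Module.Finite k U]
    (hsup : U ⊔ (J ^ (n + 1)).restrictScalars k = (J ^ n).restrictScalars k)
    (hdisj : Disjoint U ((J ^ (n + 1)).restrictScalars k)) :
    Module.length R ↥(Submodule.map (J ^ (n + 1)).mkQ (J ^ n)) = Module.finrank k U := by
  let π : R →ₗ[k] R ⧸ J ^ (n + 1) := (J ^ (n + 1)).mkQ.restrictScalars k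
  have ker_π : LinearMap.ker π = (J ^ (n + 1)).restrictScalars k := by
    ext x
    exact Submodule.Quotient.mk_eq_zero _
  have map_π : U.map π = (Submodule.map (J ^ (n + 1)).mkQ (J ^ n)).restrictScalars k := by
    have hmap := congrArg (Submodule.map π) hsup
    rwa [Submodule.map_sup, ← ker_π, LinearMap.le_ker_iff_map.mp le_rfl, sup_bot_eq] at hmap
  let e : U ≃ₗ[k] ↥(Submodule.map (J ^ (n + 1)).mkQ (J ^ n)) :=
    (LinearEquiv.ofInjective (π.domRestrict U)
      (LinearMap.ker_eq_bot.mp (LinearMap.ker_domRestrict U π ▸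
        (Submodule.disjoint_iff_comap_eq_bot.mp (ker_π ▸ hdisj))))).trans
      (LinearEquiv.ofEq _ _ ((LinearMap.range_domRestrict U π).trans map_π))
  have := Module.Finite.equiv e
  rw [length_eq_finrank_of_isTorsionBySet hJ (isTorsionBySet_map_mkQ_pow J n), e.finrank_eq]

theorem isHSMultOfDimOne_of_finrank_eq (hJ : Function.Surjective (algebraMap k (R ⧸ J)))
    (U : ℕ → Submodule k R) [∀ n, Module.Finite k (U n)]
    (hsup : ∀ n, U n ⊔ (J ^ (n + 1)).restrictScalars k = (J ^ n).restrictScalars k)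
    (hdisj : ∀ n, Disjoint (U n) ((J ^ (n + 1)).restrictScalars k)) {e n₀ : ℕ}
    (hrank : ∀ n, n₀ ≤ n → Module.finrank k (U n) = e) : IsHSMultOfDimOne R J e := by
  have length_eq (n : ℕ) : Module.length R (R ⧸ J ^ n) =
      ((∑ i ∈ Finset.range n, Module.finrank k (U i) : ℕ) : ℕ∞) := by
    induction n with
    | zero =>
      rw [pow_zero, Ideal.one_eq_top, Finset.sum_range_zero, Nat.cast_zero]
      exact Module.length_eq_zero_iff.mpr (Ideal.Quotient.subsingleton_iff.mpr rfl)
    | succ n ih =>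
      rw [length_quotient_pow_succ_eq_length_add, length_map_mkQ_pow hJ n (hsup n) (hdisj n), ih,
        Finset.sum_range_succ, ← Nat.cast_add, add_comm]
  refine ⟨fun n ↦ ∑ i ∈ Finset.range n, Module.finrank k (U i), fun n ↦ ?_, ?_⟩
  · rw [← length_eq, Module.coe_length]
  · have rank_tendsto : Filter.Tendsto (fun n ↦ (Module.finrank k (U n) : ℝ)) Filter.atTop
        (nhds (e : ℝ)) :=
      tendsto_const_nhds.congr' (Filter.eventually_atTop.mpr ⟨n₀, fun n hn ↦
        congrArg Nat.cast (hrank n hn).symm⟩)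
    refine rank_tendsto.cesaro.congr fun n ↦ ?_
    rw [Nat.cast_sum, inv_mul_eq_div]

end HilbertSamuelMultiplicity

section IdealGeneratedByForms

variable {σ k : Type*} [Field k] {T : Set (MvPolynomial σ k)} {d : ℕ}

/-- The ideal of the algebra `k[T]` generated by `T`. For a set `T` of forms of a fixed positive
degree it is the irrelevant maximal ideal of the graded algebra `k[T]`. -/
noncomputable def generatorIdeal (T : Set (MvPolynomial σ k)) : Ideal (Algebra.adjoin k T) :=
  Ideal.span {v | (v : MvPolynomial σ k) ∈ T}

theorem mem_generatorIdeal_pow_iff_exists_aeval {n : ℕ} {v : Algebra.adjoin k T} :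
    v ∈ generatorIdeal T ^ n ↔ ∃ q ∈ idealOfVars T k ^ n, aeval ((↑) : T → _) q = v.1 := by
  let φ : MvPolynomial T k →ₐ[k] Algebra.adjoin k T :=
    aeval fun t ↦ ⟨t, Algebra.subset_adjoin t.2⟩
  have coe_φ (q : MvPolynomial T k) : (φ q : MvPolynomial σ k) = aeval ((↑) : T → _) q :=
    DFunLike.congr_fun (comp_aeval _ (Algebra.adjoin k T).val) q
  have hφ : Function.Surjective φ := fun w ↦ by
    obtain ⟨q, hq⟩ := (Algebra.adjoin_eq_range k T).le w.2
    exact ⟨q, Subtype.ext ((coe_φ q).trans hq)⟩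
  have map_idealOfVars : (idealOfVars T k).map φ = generatorIdeal T := by
    rw [idealOfVars, Ideal.map_span, generatorIdeal, ← Set.range_comp]
    congr 1
    ext w
    constructor
    · rintro ⟨t, rfl⟩
      have coe_eq : (φ (X t)).1 = t := (coe_φ (X t)).trans (aeval_X _ t)
      exact Set.mem_of_eq_of_mem (s := T) coe_eq t.2
    · exact fun hw ↦ ⟨⟨w, hw⟩, Subtype.ext ((coe_φ _).trans (aeval_X _ _))⟩
  rw [← map_idealOfVars, ← Ideal.map_pow, Ideal.mem_map_iff_of_surjective φ hφ]
  simp only [Subtype.ext_iff, coe_φ]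

theorem mem_generatorIdeal_pow_iff (hd : d ≠ 0) (hT : ∀ t ∈ T, t.IsHomogeneous d) {n : ℕ}
    {v : Algebra.adjoin k T} :
    v ∈ generatorIdeal T ^ n ↔ ∀ i < n, homogeneousComponent (d * i) v.1 = 0 := by
  have hcomp := homogeneousComponent_mul_aeval (f := ((↑) : T → MvPolynomial σ k)) hd
    fun t ↦ hT t t.2
  rw [mem_generatorIdeal_pow_iff_exists_aeval]
  constructor
  · rintro ⟨q, hq, hv⟩ i hi
    have hqi : homogeneousComponent i q = 0 := by
      ext s
      rw [coeff_homogeneousComponent, coeff_zero, ite_eq_right_iff]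
      exact fun hs ↦ (mem_pow_idealOfVars_iff' n q).mp hq s (hs ▸ hi)
    rw [← hv, hcomp, hqi, map_zero]
  · intro hv
    obtain ⟨q, hq⟩ := (Algebra.adjoin_eq_range k T).le v.2
    refine ⟨∑ i ∈ Finset.range (q.totalDegree + 1),
      if n ≤ i then homogeneousComponent i q else 0, sum_mem fun i _ ↦ ?_, ?_⟩
    · split_ifs with hi
      · exact Ideal.pow_le_pow_right hi
          (mem_idealOfVars_pow_of_isHomogeneous (homogeneousComponent_isHomogeneous i q))
      · exact zero_mem _
    · refine .trans ?_ hq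
      conv_rhs => rw [← sum_homogeneousComponent q]
      simp only [map_sum]
      refine Finset.sum_congr rfl fun i _ ↦ ?_
      split_ifs with hi
      · rfl
      · rw [map_zero]
        refine ((hcomp q i).symm.trans ?_).symm
        rw [show aeval _ q = v.1 from hq]
        exact hv i (not_le.mp hi)

variable (T) in
/-- The forms of degree `n` in `k[T]`, as a subspace of `k[T]`. -/
noncomputable def formsOfDegree (n : ℕ) : Submodule k (Algebra.adjoin k T) :=
  (homogeneousSubmodule σ k n).comap (Algebra.adjoin k T).val.toLinearMap

theorem finrank_inf_formsOfDegree (N : Submodule k (Algebra.adjoin k T)) (n : ℕ) :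
    Module.finrank k ↥(N ⊓ formsOfDegree T n) =
      hilbertFunction (N.map (Algebra.adjoin k T).val.toLinearMap) n := by
  rw [hilbertFunction, Submodule.map_inf_eq_map_inf_comap]
  exact (Submodule.equivMapOfInjective _ Subtype.val_injective _).finrank_eq

instance finite_formsOfDegree [Finite σ] (n : ℕ) : Module.Finite k (formsOfDegree T n) :=
  Module.Finite.of_injective
    ((Algebra.adjoin k T).val.toLinearMap.restrict
      (p := formsOfDegree T n) (q := homogeneousSubmodule σ k n) fun _ hv ↦ hv)
    fun _ _ h ↦ Subtype.ext (Subtype.ext (congrArg (fun w : homogeneousSubmodule σ k n ↦ w.1) h))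

theorem homogeneousComponent_of_mem_formsOfDegree {m n : ℕ} {v : Algebra.adjoin k T}
    (hv : v ∈ formsOfDegree T n) :
    homogeneousComponent m v.1 = if m = n then v.1 else 0 :=
  homogeneousComponent_of_mem hv

theorem formsOfDegree_sup_generatorIdeal_pow_succ (hd : d ≠ 0) (hT : ∀ t ∈ T, t.IsHomogeneous d)
    (n : ℕ) :
    formsOfDegree T (d * n) ⊔ (generatorIdeal T ^ (n + 1)).restrictScalars k =
      (generatorIdeal T ^ n).restrictScalars k := by
  refine le_antisymm (sup_le (fun v hv ↦ ?_) (Ideal.pow_le_pow_right n.le_succ)) fun v hv ↦ ?_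
  · refine (mem_generatorIdeal_pow_iff hd hT).mpr fun i hi ↦ ?_
    rw [homogeneousComponent_of_mem_formsOfDegree hv, if_neg]
    exact fun h ↦ hi.ne (Nat.eq_of_mul_eq_mul_left (Nat.pos_of_ne_zero hd) h)
  · let w : Algebra.adjoin k T :=
      ⟨homogeneousComponent (d * n) v.1, isGraded_adjoin hd hT _ v.2 _⟩
    have hw : w ∈ formsOfDegree T (d * n) := homogeneousComponent_isHomogeneous _ _
    refine Submodule.mem_sup.mpr ⟨w, hw, v - w, ?_, add_sub_cancel w v⟩
    refine (mem_generatorIdeal_pow_iff hd hT).mpr fun i hi ↦ ?_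
    rw [Subalgebra.coe_sub, map_sub, homogeneousComponent_of_mem_formsOfDegree hw]
    obtain rfl | hin := eq_or_ne i n
    · rw [if_pos rfl, sub_self]
    · rw [if_neg fun h ↦ hin (Nat.eq_of_mul_eq_mul_left (Nat.pos_of_ne_zero hd) h), sub_zero]
      exact (mem_generatorIdeal_pow_iff hd hT).mp hv i (by omega)

theorem mem_of_mem_formsOfDegree_of_mem_sup (hd : d ≠ 0) (hT : ∀ t ∈ T, t.IsHomogeneous d)
    {I : Ideal (Algebra.adjoin k T)}
    (hI : IsGraded ((I.restrictScalars k).map (Algebra.adjoin k T).val.toLinearMap)) {n : ℕ}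
    {v : Algebra.adjoin k T} (hv : v ∈ formsOfDegree T (d * n))
    (hv' : v ∈ generatorIdeal T ^ (n + 1) ⊔ I) : v ∈ I := by
  obtain ⟨w, hw, y, hy, rfl⟩ := Submodule.mem_sup.mp hv'
  obtain ⟨z, hz, hzy⟩ := hI y.1 ⟨y, hy, rfl⟩ (d * n)
  have hcomp := homogeneousComponent_of_mem_formsOfDegree (m := d * n) hv
  rw [if_pos rfl, Subalgebra.coe_add, map_add,
    (mem_generatorIdeal_pow_iff hd hT).mp hw n n.lt_succ_self, zero_add, ← hzy] at hcomp
  rwa [← show z = w + y from Subtype.ext hcomp]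

theorem surjective_algebraMap_quotient_generatorIdeal (hd : d ≠ 0)
    (hT : ∀ t ∈ T, t.IsHomogeneous d) :
    Function.Surjective (algebraMap k (Algebra.adjoin k T ⧸ generatorIdeal T)) := by
  intro r
  obtain ⟨v, rfl⟩ := Ideal.Quotient.mk_surjective r
  refine ⟨coeff 0 v.1, Ideal.Quotient.eq.mpr ?_⟩
  rw [← pow_one (generatorIdeal T), mem_generatorIdeal_pow_iff hd hT]
  intro i hi
  rw [Nat.lt_one_iff.mp hi, mul_zero, homogeneousComponent_zero, Subalgebra.coe_sub, coeff_sub]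
  refine (congrArg C (sub_eq_zero.mpr ?_)).trans C_0
  exact coeff_zero_C _

theorem finrank_map_add_finrank_ker_inf {V W : Type*} [AddCommGroup V] [Module k V]
    [AddCommGroup W] [Module k W] (φ : V →ₗ[k] W) (U : Submodule k V) [Module.Finite k U] :
    Module.finrank k (U.map φ) + Module.finrank k ↥(LinearMap.ker φ ⊓ U) = Module.finrank k U := by
  rw [← LinearMap.finrank_range_add_finrank_ker (φ.domRestrict U), LinearMap.range_domRestrict,
    LinearMap.ker_domRestrict, ← Submodule.finrank_map_subtype_eq, Submodule.map_comap_subtype,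
    inf_comm]

theorem isHSMultOfDimOne_adjoin_quotient [Finite σ] (hd : d ≠ 0) (hT : ∀ t ∈ T, t.IsHomogeneous d)
    {I : Ideal (Algebra.adjoin k T)} {c : Submodule k (MvPolynomial σ k)} (hc : IsGraded c)
    (hI : (I.restrictScalars k).map (Algebra.adjoin k T).val.toLinearMap = c) {e n₀ : ℕ}
    (he : ∀ n, n₀ ≤ n → e + hilbertFunction c (d * n) =
      hilbertFunction (Subalgebra.toSubmodule (Algebra.adjoin k T)) (d * n)) :
    IsHSMultOfDimOne (Algebra.adjoin k T ⧸ I) ((generatorIdeal T).map (Ideal.Quotient.mk I)) e := by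
  let π := (Ideal.Quotient.mkₐ k I).toLinearMap
  have ker_π : LinearMap.ker π = I.restrictScalars k := by
    ext v
    exact Ideal.Quotient.eq_zero_iff_mem
  have map_pow (n : ℕ) : ((generatorIdeal T).map (Ideal.Quotient.mk I) ^ n).restrictScalars k =
      ((generatorIdeal T ^ n).restrictScalars k).map π := by
    ext r
    refine (Submodule.ext_iff.mp (Ideal.map_pow (Ideal.Quotient.mk I) _ n) r).symm.trans ?_
    exact Ideal.mem_map_iff_of_surjective _ Ideal.Quotient.mk_surjective
  have range_val : LinearMap.range (Algebra.adjoin k T).val.toLinearMap =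
      Subalgebra.toSubmodule (Algebra.adjoin k T) :=
    SetLike.coe_injective Subtype.range_coe
  refine isHSMultOfDimOne_of_finrank_eq (k := k) (n₀ := n₀) ?_
    (fun n ↦ (formsOfDegree T (d * n)).map π) (fun n ↦ ?_) (fun n ↦ ?_) fun n hn ↦ ?_
  · intro r
    obtain ⟨r, rfl⟩ := Ideal.Quotient.mk_surjective r
    obtain ⟨v, rfl⟩ := Ideal.Quotient.mk_surjective r
    obtain ⟨a, ha⟩ := surjective_algebraMap_quotient_generatorIdeal hd hT (Ideal.Quotient.mk _ v)
    refine ⟨a, Ideal.Quotient.eq.mpr ?_⟩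
    exact Ideal.mem_map_of_mem (Ideal.Quotient.mk I) (Ideal.Quotient.eq.mp ha)
  · rw [map_pow, map_pow, ← Submodule.map_sup, formsOfDegree_sup_generatorIdeal_pow_succ hd hT]
  · rw [map_pow, Submodule.disjoint_def]
    rintro _ ⟨v, hv, rfl⟩ ⟨w, hw, hwv⟩
    refine Ideal.Quotient.eq_zero_iff_mem.mpr
      (mem_of_mem_formsOfDegree_of_mem_sup hd hT (hI ▸ hc) hv ?_)
    exact Submodule.mem_sup.mpr ⟨w, hw, v - w, Ideal.Quotient.eq.mp hwv.symm, add_sub_cancel w v⟩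
  · have hrank := finrank_map_add_finrank_ker_inf π (formsOfDegree T (d * n))
    have htop := finrank_inf_formsOfDegree (⊤ : Submodule k (Algebra.adjoin k T)) (d * n)
    rw [ker_π, finrank_inf_formsOfDegree, hI] at hrank
    rw [top_inf_eq, Submodule.map_top, range_val] at htop
    have := he n hn
    omega

end IdealGeneratedByForms

section KrullDimension

theorem ringKrullDim_le_of_isIntegral {R S : Type*} [CommRing R] [CommRing S] [Algebra R S]
    [Algebra.IsIntegral R S] [FaithfulSMul R S] : ringKrullDim R ≤ ringKrullDim S := by
  refine iSup_le fun l ↦ ?_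
  obtain ⟨P, -, _, hP⟩ := Ideal.exists_ideal_over_prime_of_isIntegral l.head.asIdeal (⊥ : Ideal S)
    (by simp)
  have : P.LiesOver l.head.asIdeal := ⟨hP.symm⟩
  obtain ⟨L, hL, -⟩ := Ideal.exists_ltSeries_of_hasGoingUp l P
  exact (congrArg _ hL).ge.trans (Order.LTSeries.length_le_krullDim L)

theorem one_le_ringKrullDim_quotient_of_mk_mem_nonZeroDivisors {R : Type*} [CommRing R]
    {I : Ideal R} {t : R} (ht : Ideal.Quotient.mk I t ∈ nonZeroDivisors (R ⧸ I))
    (hunit : ¬IsUnit (Ideal.Quotient.mk I t)) : 1 ≤ ringKrullDim (R ⧸ I) := by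
  have : Nontrivial ((R ⧸ I) ⧸ Ideal.span {Ideal.Quotient.mk I t}) :=
    Ideal.Quotient.nontrivial_iff.mpr (mt Ideal.span_singleton_eq_top.mp hunit)
  calc 1 = 0 + 1 := (zero_add 1).symm
    _ ≤ ringKrullDim ((R ⧸ I) ⧸ Ideal.span {Ideal.Quotient.mk I t}) + 1 := by
      gcongr
      exact ringKrullDim_nonneg_of_nontrivial
    _ ≤ ringKrullDim (R ⧸ I) := ringKrullDim_quotient_succ_le_of_nonZeroDivisor ht

theorem mk_mem_nonZeroDivisors_of_forall_mem {R : Type*} [CommRing R] {I : Ideal R} {t : R}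
    (h : ∀ v, v * t ∈ I → v ∈ I) : Ideal.Quotient.mk I t ∈ nonZeroDivisors (R ⧸ I) := by
  refine mem_nonZeroDivisors_iff_right.mpr fun r hr ↦ ?_
  obtain ⟨v, rfl⟩ := Ideal.Quotient.mk_surjective r
  rw [← map_mul, Ideal.Quotient.eq_zero_iff_mem] at hr
  exact Ideal.Quotient.eq_zero_iff_mem.mpr (h v hr)

variable {σ k : Type*} [Field k] {T : Set (MvPolynomial σ k)} {d : ℕ}

theorem finite_adjoin_of_idealOfVars_pow_le [Finite σ] (hd : d ≠ 0)
    (hT : ∀ t ∈ T, t.IsHomogeneous d) {N : ℕ} (hN : idealOfVars σ k ^ N ≤ Ideal.span T) :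
    Module.Finite (Algebra.adjoin k T) (MvPolynomial σ k) := by
  have hspan : idealOfVars σ k ^ N ≤
      Ideal.span (Submodule.span k T : Set (MvPolynomial σ k)) :=
    hN.trans (Ideal.span_mono Submodule.subset_span)
  obtain ⟨F, hF⟩ := Submodule.fg_biSup (Finset.range (N + d)) (homogeneousSubmodule σ k)
    fun n _ ↦ homogeneousSubmodule_fg σ k n
  let P := Submodule.span (Algebra.adjoin k T) (F : Set (MvPolynomial σ k))
  have homogeneousSubmodule_le (n : ℕ) : homogeneousSubmodule σ k n ≤ P.restrictScalars k := by
    induction n using Nat.strong_induction_on with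
    | _ n ih =>
      obtain hn | hn := lt_or_ge n (N + d)
      · refine (le_biSup _ (Finset.mem_range.mpr hn)).trans (hF.ge.trans ?_)
        exact Submodule.span_le_restrictScalars _ _ _
      · obtain ⟨M, rfl⟩ := Nat.exists_eq_add_of_le (show d ≤ n by omega)
        refine (homogeneousSubmodule_le_mul_of_idealOfVars_pow_le (Submodule.span_le.mpr hT) hspan
          (by omega)).trans (Submodule.mul_le.mpr fun w hw f hf ↦ ?_)
        exact P.smul_mem ⟨w, Algebra.span_le_adjoin k T hw⟩ (ih M (by omega) hf)
  refine ⟨⟨F, eq_top_iff.mpr fun f _ ↦ ?_⟩⟩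
  rw [← sum_homogeneousComponent f]
  exact sum_mem fun n _ ↦ homogeneousSubmodule_le n (homogeneousComponent_isHomogeneous n f)

theorem exists_mem_generatorIdeal_isRelPrime (hp : ∀ p, Prime p → ∃ t ∈ T, ¬p ∣ t)
    {h : MvPolynomial σ k} (hh : h ≠ 0) : ∃ t ∈ generatorIdeal T, IsRelPrime h t.1 := by
  classical
  let F := (UniqueFactorizationMonoid.factors h).toFinset
  have prime_of_mem (p) (hpF : p ∈ F) : Prime p :=
    UniqueFactorizationMonoid.prime_of_factor p (Multiset.mem_toFinset.mp hpF)
  have havoid : ¬(generatorIdeal T : Set (Algebra.adjoin k T)) ⊆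
      ⋃ p ∈ (F : Set (MvPolynomial σ k)), (Ideal.span {p}).comap (Algebra.adjoin k T).val := by
    rw [Ideal.subset_union_prime 0 0]
    · rintro ⟨p, hpF, hle⟩
      obtain ⟨t, ht, hpt⟩ := hp p (prime_of_mem p hpF)
      exact hpt (Ideal.mem_span_singleton.mp
        (hle (show ⟨t, Algebra.subset_adjoin ht⟩ ∈ generatorIdeal T from Ideal.subset_span ht)))
    · intro p hpF _ _
      have : (Ideal.span {p}).IsPrime :=
        (Ideal.span_singleton_prime (prime_of_mem p hpF).ne_zero).mpr (prime_of_mem p hpF)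
      exact Ideal.comap_isPrime _ _
  obtain ⟨t, ht, htF⟩ := Set.not_subset.mp havoid
  refine ⟨t, ht, WfDvdMonoid.isRelPrime_of_no_irreducible_factors (fun h0 ↦ hh h0.1) ?_⟩
  intro q hq hqh hqt
  obtain ⟨p, hpF, hqp⟩ := UniqueFactorizationMonoid.exists_mem_factors_of_dvd hh hq hqh
  exact htF (Set.mem_iUnion₂.mpr ⟨p, Multiset.mem_toFinset.mpr hpF,
    Ideal.mem_span_singleton.mpr (hqp.symm.dvd.trans hqt)⟩)

theorem exists_mem_generatorIdeal_mk_mem_nonZeroDivisors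
    (hp : ∀ p, Prime p → ∃ t ∈ T, ¬p ∣ t) {h : MvPolynomial σ k} (hh : h ≠ 0)
    {I : Ideal (Algebra.adjoin k T)} (hI : ∀ v, v ∈ I ↔ h ∣ v.1) :
    ∃ t ∈ generatorIdeal T,
      Ideal.Quotient.mk I t ∈ nonZeroDivisors (Algebra.adjoin k T ⧸ I) := by
  obtain ⟨t, ht, hrel⟩ := exists_mem_generatorIdeal_isRelPrime hp hh
  refine ⟨t, ht, mk_mem_nonZeroDivisors_of_forall_mem fun v hv ↦ (hI v).mpr ?_⟩
  exact hrel.dvd_of_dvd_mul_right ((hI (v * t)).mp hv)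

theorem not_isUnit_mk_of_mem_generatorIdeal (hd : d ≠ 0) (hT : ∀ t ∈ T, t.IsHomogeneous d)
    {I : Ideal (Algebra.adjoin k T)} (hI : ∀ v ∈ I, constantCoeff v.1 = 0)
    {t : Algebra.adjoin k T} (ht : t ∈ generatorIdeal T) : ¬IsUnit (Ideal.Quotient.mk I t) := by
  intro hunit
  obtain ⟨r, hr⟩ := hunit.exists_right_inv
  obtain ⟨s, rfl⟩ := Ideal.Quotient.mk_surjective r
  rw [← map_mul, ← map_one (Ideal.Quotient.mk I), Ideal.Quotient.eq] at hr
  have hts : t * s ∈ generatorIdeal T ^ 1 := by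
    rw [pow_one]
    exact Ideal.mul_mem_right _ _ ht
  have hcomp := (mem_generatorIdeal_pow_iff hd hT).mp hts 0 one_pos
  rw [mul_zero, homogeneousComponent_zero, C_eq_zero] at hcomp
  have hone := hI _ hr
  rw [Subalgebra.coe_sub, map_sub, constantCoeff_eq, hcomp] at hone
  simp at hone

theorem ringKrullDim_adjoin_quotient_succ_le [Finite σ] (hd : d ≠ 0)
    (hT : ∀ t ∈ T, t.IsHomogeneous d) {N : ℕ} (hN : idealOfVars σ k ^ N ≤ Ideal.span T)
    {I : Ideal (Algebra.adjoin k T)} (hI : I ≠ ⊥) :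
    ringKrullDim (Algebra.adjoin k T ⧸ I) + 1 ≤ Nat.card σ := by
  have := finite_adjoin_of_idealOfVars_pow_le hd hT hN
  obtain ⟨x, hx, hx0⟩ := Submodule.exists_mem_ne_zero_of_ne_bot hI
  calc ringKrullDim (Algebra.adjoin k T ⧸ I) + 1
    _ ≤ ringKrullDim (Algebra.adjoin k T) :=
      ringKrullDim_succ_le_of_surjective _ Ideal.Quotient.mk_surjective
        (mem_nonZeroDivisors_of_ne_zero hx0) (Ideal.Quotient.eq_zero_iff_mem.mpr hx)
    _ ≤ ringKrullDim (MvPolynomial σ k) := ringKrullDim_le_of_isIntegral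
    _ = Nat.card σ := by rw [ringKrullDim_of_isNoetherianRing, ringKrullDim_eq_zero_of_field,
        zero_add]

end KrullDimension

theorem exists_mem_not_dvd_of_one_lt_idealHeight {R : Type*} [CommRing R] [IsNoetherianRing R]
    {S : Set R} (hS : 1 < idealHeight (Ideal.span S)) {p : R} (hp : Prime p) :
    ∃ f ∈ S, ¬p ∣ f := by
  by_contra! hdvd
  have hprime : (Ideal.span {p}).IsPrime := (Ideal.span_singleton_prime hp.ne_zero).mpr hp
  have hle : Ideal.span S ≤ Ideal.span {p} :=
    Ideal.span_le.mpr fun f hf ↦ Ideal.mem_span_singleton.mpr (hdvd f hf)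
  have hheight : (Ideal.span {p}).height ≤ 1 :=
    Ideal.height_le_one_of_isPrincipal_of_mem_minimalPrimes _ _
      (Ideal.minimalPrimes_eq_subsingleton_self.ge rfl)
  rw [PrimeSpectrum.height_eq_orderHeight ⟨_, hprime⟩] at hheight
  have hinf : idealHeight (Ideal.span S) ≤ Order.height (⟨_, hprime⟩ : PrimeSpectrum R) :=
    iInf₂_le (⟨_, hprime⟩ : PrimeSpectrum R) hle
  exact (hinf.trans hheight).not_gt hS

section RelativeConductor

variable {R B : Type*} [CommRing R] [CommRing B] [Algebra R B] {S V : Subalgebra R B}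

theorem mem_annihilator_quotient_inclusion_iff (hle : S ≤ V) (x : S) :
    letI : Algebra S V := (Subalgebra.inclusion hle).toRingHom.toAlgebra
    x ∈ Module.annihilator S (V ⧸ LinearMap.range (Algebra.linearMap S V)) ↔
      x.1 ∈ relConductor S V := by
  let : Algebra S V := (Subalgebra.inclusion hle).toRingHom.toAlgebra
  rw [Module.mem_annihilator, mem_relConductor,
    (Submodule.Quotient.mk_surjective (LinearMap.range (Algebra.linearMap S V))).forall,
    Subtype.forall]
  refine forall₂_congr fun v hv ↦ ?_
  rw [← Submodule.Quotient.mk_smul, Submodule.Quotient.mk_eq_zero, Algebra.smul_def]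
  constructor
  · rintro ⟨a, ha⟩
    exact Set.mem_of_eq_of_mem (s := S) (Subtype.ext_iff.mp ha).symm a.2
  · exact fun hxv ↦ ⟨⟨_, hxv⟩, rfl⟩

variable {c : Ideal S} (hc : ∀ x, x ∈ c ↔ x.1 ∈ relConductor S V)
include hc

theorem setOf_exists_mem_eq_coe_relConductor :
    {f : B | ∃ x ∈ c, f = x.1} = (relConductor S V : Set B) := by
  ext f
  constructor
  · rintro ⟨x, hx, rfl⟩
    exact (hc x).mp hx
  · exact fun hf ↦ ⟨⟨f, relConductor_le S V hf⟩, (hc _).mpr hf, rfl⟩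

theorem mem_span_setOf_exists_mem_iff (v : V) :
    v ∈ Ideal.span {v : V | ∃ x ∈ c, v.1 = x.1} ↔ v.1 ∈ relConductor S V := by
  have mem_iff (w : V) : (∃ x ∈ c, w.1 = x.1) ↔ w.1 ∈ relConductor S V :=
    Set.ext_iff.mp (setOf_exists_mem_eq_coe_relConductor hc) w.1
  refine ⟨fun hv ↦ ?_, fun hv ↦ Ideal.subset_span ((mem_iff v).mpr hv)⟩
  induction hv using Submodule.span_induction with
  | mem w hw => exact (mem_iff w).mp hw
  | zero => exact zero_mem _
  | add w w' _ _ hw hw' => exact add_mem hw hw'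
  | smul r w _ hw => exact Set.mem_of_eq_of_mem (mul_comm _ _) (mul_mem_relConductor hw r.2)

end RelativeConductor

section ConductorQuotients

variable {k : Type*} [Field k]

theorem ne_bot_of_forall_mem_iff_dvd {R B : Type*} [CommRing R] [CommRing B] [IsDomain B]
    [Algebra R B] [Algebra.IsIntegral R B] {h : B} (h0 : h ≠ 0) {I : Ideal R}
    (hI : ∀ v, v ∈ I ↔ h ∣ algebraMap R B v) : I ≠ ⊥ := by
  have heq : I = (Ideal.span {h}).comap (algebraMap R B) :=
    Ideal.ext fun v ↦ (hI v).trans Ideal.mem_span_singleton.symm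
  have := (algebraMap R B).domain_nontrivial
  rw [heq]
  exact Ideal.comap_ne_bot_of_integral_mem h0 (Ideal.mem_span_singleton_self h)
    (Algebra.IsIntegral.isIntegral h)

theorem map_val_eq_inf_span_singleton {R B : Type*} [CommRing R] [CommRing B] [Algebra R B]
    {S : Subalgebra R B} {h : B} {I : Ideal S} (hI : ∀ v, v ∈ I ↔ h ∣ v.1) :
    (I.restrictScalars R).map S.val.toLinearMap =
      Subalgebra.toSubmodule S ⊓ (Ideal.span {h}).restrictScalars R := by
  ext f
  constructor
  · rintro ⟨v, hv, rfl⟩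
    exact ⟨v.2, Ideal.mem_span_singleton.mpr ((hI v).mp hv)⟩
  · exact fun hf ↦ ⟨⟨f, hf.1⟩, (hI _).mpr (Ideal.mem_span_singleton.mp hf.2), rfl⟩

theorem constantCoeff_eq_zero_of_dvd {σ : Type*} {h f : MvPolynomial σ k} {m : ℕ} (hm : m ≠ 0)
    (hh : h.IsHomogeneous m) (hf : h ∣ f) : constantCoeff f = 0 := by
  obtain ⟨w, rfl⟩ := hf
  rw [map_mul, constantCoeff_eq, hh.coeff_eq_zero (by simpa using hm.symm), zero_mul]

theorem ringKrullDim_adjoin_quotient_eq_one {T : Set (MvPolynomial (Fin 2) k)} {d : ℕ}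
    (hd : d ≠ 0) (hT : ∀ t ∈ T, t.IsHomogeneous d) (hp : ∀ p, Prime p → ∃ t ∈ T, ¬p ∣ t)
    {h : MvPolynomial (Fin 2) k} {m : ℕ} (hm : m ≠ 0) (hh : h.IsHomogeneous m) (h0 : h ≠ 0)
    {I : Ideal (Algebra.adjoin k T)} (hI : ∀ v, v ∈ I ↔ h ∣ v.1) :
    ringKrullDim (Algebra.adjoin k T ⧸ I) = 1 := by
  obtain ⟨N, hN⟩ := exists_idealOfVars_pow_le_span (fun t ht ↦ ⟨d, hT t ht⟩) hp
  obtain ⟨t, ht, hnzd⟩ := exists_mem_generatorIdeal_mk_mem_nonZeroDivisors hp h0 hI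
  have := finite_adjoin_of_idealOfVars_pow_le hd hT hN
  have hbot : I ≠ ⊥ := ne_bot_of_forall_mem_iff_dvd h0 hI
  have hconst (v) (hv : v ∈ I) : constantCoeff v.1 = 0 :=
    constantCoeff_eq_zero_of_dvd hm hh ((hI v).mp hv)
  refine le_antisymm ?_ (one_le_ringKrullDim_quotient_of_mk_mem_nonZeroDivisors hnzd
    (not_isUnit_mk_of_mem_generatorIdeal hd hT hconst ht))
  have hdim := ringKrullDim_adjoin_quotient_succ_le hd hT hN hbot
  have hcard : (Nat.card (Fin 2) : WithBot ℕ∞) = 1 + 1 := by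
    rw [Nat.card_fin, Nat.cast_ofNat, one_add_one_eq_two]
  exact ENat.WithBot.add_le_add_one_right_iff.mp (hdim.trans hcard.le)

theorem isCohenMacaulay_adjoin_quotient {T : Set (MvPolynomial (Fin 2) k)} {d : ℕ} (hd : d ≠ 0)
    (hT : ∀ t ∈ T, t.IsHomogeneous d) (hp : ∀ p, Prime p → ∃ t ∈ T, ¬p ∣ t)
    {h : MvPolynomial (Fin 2) k} {m : ℕ} (hm : m ≠ 0) (hh : h.IsHomogeneous m) (h0 : h ≠ 0)
    {I : Ideal (Algebra.adjoin k T)} (hI : ∀ v, v ∈ I ↔ h ∣ v.1) {e n₀ : ℕ}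
    (he : ∀ n, n₀ ≤ n → e + hilbertFunction
      (Subalgebra.toSubmodule (Algebra.adjoin k T) ⊓ (Ideal.span {h}).restrictScalars k) (d * n) =
        hilbertFunction (Subalgebra.toSubmodule (Algebra.adjoin k T)) (d * n)) :
    ringKrullDim (Algebra.adjoin k T ⧸ I) = 1 ∧
      (∃ t ∈ generatorIdeal T,
        Ideal.Quotient.mk I t ∈ nonZeroDivisors (Algebra.adjoin k T ⧸ I)) ∧
      IsHSMultOfDimOne (Algebra.adjoin k T ⧸ I)
        ((generatorIdeal T).map (Ideal.Quotient.mk I)) e :=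
  ⟨ringKrullDim_adjoin_quotient_eq_one hd hT hp hm hh h0 hI,
    exists_mem_generatorIdeal_mk_mem_nonZeroDivisors hp h0 hI,
    isHSMultOfDimOne_adjoin_quotient hd hT
      ((isGraded_adjoin hd hT).inf (isGraded_span_singleton hh))
      (map_val_eq_inf_span_singleton hI) he⟩

theorem sum_add_sub_eq_mul_add_choose_two (m r : ℕ) :
    ∑ i : Fin (m + 1), (m + r - i) = (m + 1) * r + (m + 1).choose 2 := by
  induction m with
  | zero => simp
  | succ m ih =>
    rw [Fin.sum_univ_succ, Fin.val_zero, Nat.sub_zero, Nat.choose_succ_succ' (m + 1) 1,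
      Nat.choose_one_right]
    have hshift (i : Fin (m + 1)) : m + 1 + r - i.succ = m + r - i := by
      rw [Fin.val_succ]
      omega
    simp only [hshift, ih]
    ring

theorem span_veronese_inf_span_singleton {E : ℕ} {h : MvPolynomial (Fin 2) k}
    (hh : h.IsHomogeneous ((E + 1) * E)) :
    Ideal.span (↑(Subalgebra.toSubmodule (veronese k (E + 2)) ⊓
      (Ideal.span {h}).restrictScalars k) : Set (MvPolynomial (Fin 2) k)) =
        Ideal.span {h} * idealOfVars (Fin 2) k ^ E := by
  refine le_antisymm (Ideal.span_le.mpr ?_) ?_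
  · refine veronese_inf_span_singleton_le (c := (Ideal.span {h} * idealOfVars (Fin 2) k ^ E
      |>.restrictScalars k)) hh fun m ↦ ?_
    rintro _ ⟨f, hf, rfl⟩
    exact Ideal.mul_mem_mul (Ideal.mem_span_singleton_self h)
      (Ideal.pow_le_pow_right (by omega) (mem_idealOfVars_pow_of_isHomogeneous hf))
  · rw [pow_idealOfVars_eq_span, Ideal.span_mul_span', Ideal.span_le]
    rintro _ ⟨_, rfl, _, ⟨s, hs, rfl⟩, rfl⟩
    refine Ideal.subset_span ⟨homogeneousSubmodule_le_veronese k (E + 2) E ?_,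
      Ideal.mem_span_singleton.mpr (dvd_mul_right _ _)⟩
    exact mul_isHomogeneous_of_add_eq hh (isHomogeneous_monomial 1 hs) (by ring)

end ConductorQuotients

section ConeRing

variable {k : Type*} [Field k] {E : ℕ} {g : Fin 3 → MvPolynomial (Fin 2) k}
  (hg : ∀ i, (g i).IsHomogeneous (E + 2)) (hp : ∀ p, Prime p → ∃ i, ¬p ∣ g i)

theorem generatorIdeal_range_eq_span_range_coneGen :
    generatorIdeal (Set.range g) = Ideal.span (Set.range (coneGen g)) := by
  refine congrArg Ideal.span (Set.ext fun v ↦ ?_)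
  exact ⟨fun ⟨i, hi⟩ ↦ ⟨i, Subtype.ext hi⟩, fun ⟨i, hi⟩ ↦ ⟨i, Subtype.ext_iff.mp hi⟩⟩

include hg in
theorem coneRing_le_veronese : coneRing g ≤ veronese k (E + 2) :=
  Algebra.adjoin_mono (Set.range_subset_iff.mpr hg)

variable (hbir : ∀ v ∈ veronese k (E + 2), ∃ a ∈ coneRing g, a ≠ 0 ∧ a * v ∈ coneRing g)
include hg hp hbir

theorem hilbertFunction_relConductor_coneRing_veronese (n : ℕ) :
    hilbertFunction (relConductor (coneRing g) (veronese k (E + 2))) ((E + 2) * n) =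
      (n - E) + (E + 1) * (n + 1 - E) := by
  rw [hilbertFunction_relConductor_coneRing hg hp hbir E.succ_pos, Nat.add_sub_add_right]
  congr 2
  omega

theorem choose_two_add_hilbertFunction_relConductor_coneRing {n : ℕ} (hn : E ≤ n) :
    (E + 1).choose 2 +
        hilbertFunction (relConductor (coneRing g) (veronese k (E + 2))) ((E + 2) * n) =
      hilbertFunction (Subalgebra.toSubmodule (coneRing g)) ((E + 2) * n) := by
  obtain ⟨r, rfl⟩ := Nat.exists_eq_add_of_le hn
  rw [hilbertFunction_relConductor_coneRing_veronese hg hp hbir,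
    hilbertFunction_coneRing hg hp hbir, add_right_comm E r 1,
    sum_add_sub_eq_mul_add_choose_two, Nat.choose_succ_succ' (E + 1) 1, Nat.choose_one_right,
    Nat.add_sub_cancel_left, add_assoc E 1 r, Nat.add_sub_cancel_left]
  ring

theorem mul_add_hilbertFunction_relConductor_coneRing {n : ℕ} (hn : E ≤ n) :
    (E + 1) * E +
        hilbertFunction (relConductor (coneRing g) (veronese k (E + 2))) ((E + 2) * n) =
      hilbertFunction (Subalgebra.toSubmodule (veronese k (E + 2))) ((E + 2) * n) := by
  obtain ⟨r, rfl⟩ := Nat.exists_eq_add_of_le hn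
  rw [hilbertFunction_relConductor_coneRing_veronese hg hp hbir, hilbertFunction_veronese,
    Nat.add_sub_cancel_left, add_assoc E r 1, Nat.add_sub_cancel_left]
  ring

theorem exists_relConductor_eq_veronese_inf_span_singleton :
    ∃ h : MvPolynomial (Fin 2) k, h.IsHomogeneous ((E + 1) * E) ∧ h ≠ 0 ∧
      relConductor (coneRing g) (veronese k (E + 2)) =
        Subalgebra.toSubmodule (veronese k (E + 2)) ⊓ (Ideal.span {h}).restrictScalars k :=
  exists_eq_veronese_inf_span_singleton (fun _ hx _ hv ↦ mul_mem_relConductor hx hv)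
    (hilbertFunction_relConductor_coneRing_veronese hg hp hbir)
    (isGraded_relConductor (isGraded_adjoin (by omega) (Set.forall_mem_range.mpr hg))
      (isGraded_veronese (by omega)))
    ((relConductor_le _ _).trans (coneRing_le_veronese hg))

variable (hE : E ≠ 0) {h : MvPolynomial (Fin 2) k} (hh : h.IsHomogeneous ((E + 1) * E))
  (h0 : h ≠ 0) (heq : relConductor (coneRing g) (veronese k (E + 2)) =
    Subalgebra.toSubmodule (veronese k (E + 2)) ⊓ (Ideal.span {h}).restrictScalars k)
include hE hh h0 heq

theorem isCohenMacaulay_coneRing_quotient {c : Ideal (coneRing g)}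
    (hc : ∀ x, x ∈ c ↔ x.1 ∈ relConductor (coneRing g) (veronese k (E + 2))) :
    ringKrullDim (coneRing g ⧸ c) = 1 ∧
      (∃ t ∈ Ideal.span (Set.range (coneGen g)),
        Ideal.Quotient.mk c t ∈ nonZeroDivisors (coneRing g ⧸ c)) ∧
      IsHSMultOfDimOne (coneRing g ⧸ c)
        ((Ideal.span (Set.range (coneGen g))).map (Ideal.Quotient.mk c)) ((E + 1).choose 2) := by
  have hA := coneRing_le_veronese hg
  have hinf : Subalgebra.toSubmodule (coneRing g) ⊓ (Ideal.span {h}).restrictScalars k =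
      relConductor (coneRing g) (veronese k (E + 2)) :=
    le_antisymm (heq ▸ inf_le_inf_right _ hA)
      (le_inf (relConductor_le _ _) (heq.le.trans inf_le_right))
  have mem_iff (x : coneRing g) : x ∈ c ↔ h ∣ x.1 := by
    rw [hc, heq]
    exact (and_iff_right (hA x.2)).trans Ideal.mem_span_singleton
  rw [← generatorIdeal_range_eq_span_range_coneGen]
  exact isCohenMacaulay_adjoin_quotient (E + 1).succ_ne_zero (Set.forall_mem_range.mpr hg)
    (fun p hprime ↦ Set.exists_range_iff.mpr (hp p hprime)) (mul_ne_zero E.succ_ne_zero hE) hh h0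
    mem_iff fun n hn ↦ (congrArg (_ + hilbertFunction · _) hinf).trans
      (choose_two_add_hilbertFunction_relConductor_coneRing hg hp hbir hn)

theorem isCohenMacaulay_veronese_quotient {c : Ideal (veronese k (E + 2))}
    (hc : ∀ v, v ∈ c ↔ v.1 ∈ relConductor (coneRing g) (veronese k (E + 2))) :
    ringKrullDim (veronese k (E + 2) ⧸ c) = 1 ∧
      (∃ t ∈ Ideal.span {v : veronese k (E + 2) | v.1.IsHomogeneous (E + 2)},
        Ideal.Quotient.mk c t ∈ nonZeroDivisors (veronese k (E + 2) ⧸ c)) ∧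
      IsHSMultOfDimOne (veronese k (E + 2) ⧸ c)
        ((Ideal.span {v : veronese k (E + 2) | v.1.IsHomogeneous (E + 2)}).map
          (Ideal.Quotient.mk c)) ((E + 1) * E) := by
  have mem_iff (v : veronese k (E + 2)) : v ∈ c ↔ h ∣ v.1 := by
    rw [hc, heq]
    exact (and_iff_right v.2).trans Ideal.mem_span_singleton
  have exists_not_dvd (p : MvPolynomial (Fin 2) k) (hprime : Prime p) :
      ∃ t : MvPolynomial (Fin 2) k, t.IsHomogeneous (E + 2) ∧ ¬p ∣ t :=
    (hp p hprime).imp' g fun i hi ↦ ⟨hg i, hi⟩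
  exact isCohenMacaulay_adjoin_quotient (E + 1).succ_ne_zero (fun _ ht ↦ ht) exists_not_dvd
    (mul_ne_zero E.succ_ne_zero hE) hh h0 mem_iff fun n hn ↦
      (congrArg (_ + hilbertFunction · _) heq.symm).trans
        (mul_add_hilbertFunction_relConductor_coneRing hg hp hbir hn)

end ConeRing

/-- With the conductor setup for a true triple `g` of forms of degree `d` — `B = k[x,y]`, `V`
the `d`-th Veronese subring of `B`, `A = k[g₁,g₂,g₃] ⊆ V` a birational extension with
`(g₁,g₂,g₃)B` of height `2`, and `c = A : V` the conductor (the annihilator of the `A`-module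
`V/A`), an ideal of both `A` and `V` —
(a) the ring `A/c` is `1`-dimensional Cohen–Macaulay of multiplicity `binom(d−1, 2)`;
(b) the ring `V/c` is `1`-dimensional Cohen–Macaulay of multiplicity `(d−1)(d−2)`; and
(c) the extended ideal `cB` equals `c_g · (x,y)^{d−2}` for some homogeneous form `c_g ∈ B` of
degree `(d−1)(d−2)`. -/
theorem stmt16 {k : Type*} [Field k] (d : ℕ) (hd : 3 ≤ d)
    (g : Fin 3 → MvPolynomial (Fin 2) k) (hg : ∀ i, (g i).IsHomogeneous d)
    (hht : idealHeight (Ideal.span (Set.range g)) = 2)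
    (hbir : ∀ v ∈ veronese k d,
      ∃ x ∈ coneRing g, ∃ y ∈ coneRing g, y ≠ 0 ∧ y * v = x) :
    -- `A ⊆ V`, making `V` an `A`-algebra
    letI : Algebra (coneRing g) (veronese k d) :=
      ((Subalgebra.inclusion
        (show coneRing g ≤ veronese k d from
          Algebra.adjoin_le (by rintro x ⟨i, rfl⟩; exact Algebra.subset_adjoin (hg i)))).toRingHom).toAlgebra
    -- the `A`-module `V/A`
    let M := (veronese k d) ⧸
      LinearMap.range (Algebra.linearMap (coneRing g) (veronese k d))
    -- the conductor `c = A : V`, as an ideal of `A`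
    let c : Ideal (coneRing g) := Module.annihilator (coneRing g) M
    -- the conductor as an ideal of `V`
    let cV : Ideal (veronese k d) := Ideal.span
      {v : veronese k d | ∃ x ∈ c, (v : MvPolynomial (Fin 2) k) = (x : MvPolynomial (Fin 2) k)}
    -- the extension `cB` of the conductor to `B`
    let cB : Ideal (MvPolynomial (Fin 2) k) := Ideal.span
      {f : MvPolynomial (Fin 2) k | ∃ x ∈ c, f = (x : MvPolynomial (Fin 2) k)}
    -- (a) `A/c` is 1-dimensional Cohen–Macaulay of multiplicity `(d-1).choose 2`
    (ringKrullDim (coneRing g ⧸ c) = 1 ∧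
      (∃ t ∈ Ideal.span (Set.range (coneGen g)),
        Ideal.Quotient.mk c t ∈ nonZeroDivisors (coneRing g ⧸ c)) ∧
      IsHSMultOfDimOne (coneRing g ⧸ c)
        (Ideal.map (Ideal.Quotient.mk c) (Ideal.span (Set.range (coneGen g))))
        ((d - 1).choose 2)) ∧
    -- (b) `V/c` is 1-dimensional Cohen–Macaulay of multiplicity `(d-1)*(d-2)`
    (ringKrullDim (veronese k d ⧸ cV) = 1 ∧
      (∃ t ∈ Ideal.span {v : veronese k d | (v : MvPolynomial (Fin 2) k).IsHomogeneous d},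
        Ideal.Quotient.mk cV t ∈ nonZeroDivisors (veronese k d ⧸ cV)) ∧
      IsHSMultOfDimOne (veronese k d ⧸ cV)
        (Ideal.map (Ideal.Quotient.mk cV)
          (Ideal.span {v : veronese k d | (v : MvPolynomial (Fin 2) k).IsHomogeneous d}))
        ((d - 1) * (d - 2))) ∧
    -- (c) `cB = c_g · (x,y)^{d-2}` for a form `c_g` of degree `(d-1)(d-2)`
    (∃ cg : MvPolynomial (Fin 2) k, cg.IsHomogeneous ((d - 1) * (d - 2)) ∧
      cB = Ideal.span {cg} *
        (Ideal.span {(X 0 : MvPolynomial (Fin 2) k), X 1}) ^ (d - 2)) := by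
  intro M c cV cB
  obtain ⟨E, rfl⟩ : ∃ E, d = E + 2 := ⟨d - 2, by omega⟩
  have hp (p) (hprime : Prime p) : ∃ i, ¬p ∣ g i := by
    obtain ⟨_, ⟨i, rfl⟩, hi⟩ :=
      exists_mem_not_dvd_of_one_lt_idealHeight (hht ▸ Nat.one_lt_ofNat) hprime
    exact ⟨i, hi⟩
  have hbir' (v) (hv : v ∈ veronese k (E + 2)) : ∃ a ∈ coneRing g, a ≠ 0 ∧ a * v ∈ coneRing g := by
    obtain ⟨_, hx, y, hy, hy0, rfl⟩ := hbir v hv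
    exact ⟨y, hy, hy0, hx⟩
  have hc (x) : x ∈ c ↔ x.1 ∈ relConductor (coneRing g) (veronese k (E + 2)) :=
    mem_annihilator_quotient_inclusion_iff (coneRing_le_veronese hg) x
  obtain ⟨h, hh, h0, heq⟩ := exists_relConductor_eq_veronese_inf_span_singleton hg hp hbir'
  refine ⟨isCohenMacaulay_coneRing_quotient hg hp hbir' (by omega) hh h0 heq hc,
    isCohenMacaulay_veronese_quotient hg hp hbir' (by omega) hh h0 heq
      (mem_span_setOf_exists_mem_iff hc), h, hh, ?_⟩
  rw [← idealOfVars_fin_two]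
  calc cB = Ideal.span (relConductor (coneRing g) (veronese k (E + 2)) : Set _) :=
        congrArg Ideal.span (setOf_exists_mem_eq_coe_relConductor hc)
    _ = Ideal.span {h} * idealOfVars (Fin 2) k ^ E := by
        rw [heq, span_veronese_inf_span_singleton hh]
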